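/- arXiv:2105.05984 — 11 statements merged into one kernel-verified Lean document; each statement's English description precedes it below -/
import Mathlib

section
/- Let p be a prime, let m be an integer with 1 ≤ m ≤ p, let x, y ∈ {0, …, p−1} be distinct keys, and let a ∈ {0, …, m−1}. With h a random linear hash function with parameters p and m, it holds that | Pr( h(x) ≡ h(y) + a (mod m) ) − 1/m | ≤ 3/p; in particular this quantity is also at most 3/m. -/
/-!
If `x - y` is invertible modulo `p`, then `(σ, τ) ↦ (σ x + τ, σ y + τ)` permutes the pairs of
residues modulo `p`. Hence the favourable pairs `(σ, τ)` are as many as the pairs `(u, v)` of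
residues with `u ≡ v + a` modulo `m`. For each of the `p` values of `v`, the number of such `u`
differs from `p / m` by less than one, so the total differs from `p ^ 2 / m` by at most `p`.
-/

open Finset

theorem mul_add_pair_injective {R : Type*} [NonUnitalNonAssocRing R] {x y : R}
    (hxy : IsRightRegular (x - y)) :
    Function.Injective fun q : R × R => (q.1 * x + q.2, q.1 * y + q.2) := by
  rintro ⟨s, t⟩ ⟨s', t'⟩ h
  obtain ⟨hx, hy⟩ := Prod.mk.inj h
  have hs : s = s' := by
    apply hxy
    calc s * (x - y) = (s * x + t) - (s * y + t) := by rw [mul_sub]; abel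
      _ = (s' * x + t') - (s' * y + t') := congrArg₂ (· - ·) hx hy
      _ = s' * (x - y) := by rw [mul_sub]; abel
  subst hs
  exact Prod.ext rfl (add_left_cancel hx)

theorem card_filter_comp_of_injOn_of_mapsTo {α : Type*} {s : Finset α}
    {f : α → α} (hinj : Set.InjOn f s) (hmaps : Set.MapsTo f s s)
    (P : α → Prop) [DecidablePred P] :
    #{q ∈ s | P (f q)} = #{q ∈ s | P q} := by
  classical
  have himage : s.image f = s :=
    eq_of_subset_of_card_le (image_subset_iff.2 hmaps) (card_image_of_injOn hinj).ge
  conv_rhs => rw [← himage, filter_image]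
  exact (card_image_of_injOn (hinj.mono (coe_subset.2 (filter_subset _ s)))).symm

/-- The values `(σ x + τ) mod n` and `(σ y + τ) mod n`, as a function of the seed `(σ, τ)`: what a
linear hash function computes on the keys `x` and `y` before its final reduction modulo `m`. -/
def linearResidues (n x y : ℕ) (q : ℕ × ℕ) : ℕ × ℕ :=
  ((q.1 * x + q.2) % n, (q.1 * y + q.2) % n)

theorem linearResidues_mapsTo (n x y : ℕ) :
    Set.MapsTo (linearResidues n x y) (range n ×ˢ range n : Finset (ℕ × ℕ))
      (range n ×ˢ range n : Finset (ℕ × ℕ)) := by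
  intro q hq
  have hn : 0 < n := Nat.zero_lt_of_lt (mem_range.1 (mem_product.1 hq).1)
  exact mem_product.2 ⟨mem_range.2 (Nat.mod_lt _ hn), mem_range.2 (Nat.mod_lt _ hn)⟩

theorem linearResidues_injOn {n x y : ℕ} (hxy : IsCoprime (n : ℤ) (x - y)) :
    Set.InjOn (linearResidues n x y) (range n ×ˢ range n : Finset (ℕ × ℕ)) := by
  rintro ⟨s, t⟩ hst ⟨s', t'⟩ hst' h
  simp only [coe_product, coe_range, Set.mem_prod, Set.mem_Iio] at hst hst'
  obtain ⟨hx, hy⟩ := Prod.mk.inj h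
  have hx' : (s : ZMod n) * x + t = s' * x + t' := mod_cast (ZMod.natCast_eq_natCast_iff _ _ n).2 hx
  have hy' : (s : ZMod n) * y + t = s' * y + t' := mod_cast (ZMod.natCast_eq_natCast_iff _ _ n).2 hy
  have hunit : IsUnit ((x : ZMod n) - y) :=
    mod_cast (ZMod.coe_int_isUnit_iff_isCoprime (x - y) n).2 hxy
  have hcast : ((s : ZMod n), (t : ZMod n)) = ((s' : ZMod n), (t' : ZMod n)) :=
    mul_add_pair_injective hunit.isRegular.right (Prod.ext hx' hy')
  obtain ⟨hs, ht⟩ := Prod.mk.inj hcast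
  rw [ZMod.natCast_eq_natCast_iff] at hs ht
  exact Prod.ext (hs.eq_of_lt_of_lt hst.1 hst'.1) (ht.eq_of_lt_of_lt hst.2 hst'.2)

theorem card_linear_hash_modEq {n x y : ℕ} (hxy : IsCoprime (n : ℤ) (x - y)) (m a : ℕ) :
    #{q ∈ range n ×ˢ range n |
        (q.1 * x + q.2) % n % m ≡ (q.1 * y + q.2) % n % m + a [MOD m]} =
      #{q ∈ range n ×ˢ range n | q.1 ≡ q.2 + a [MOD m]} := by
  rw [← card_filter_comp_of_injOn_of_mapsTo (linearResidues_injOn hxy)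
    (linearResidues_mapsTo n x y) fun q => q.1 ≡ q.2 + a [MOD m]]
  refine congrArg card (filter_congr fun q _ => ?_)
  simp only [linearResidues, Nat.ModEq, Nat.mod_mod, Nat.mod_add_mod]

theorem abs_card_range_modEq_sub_div_lt_one {m : ℕ} (hm : 0 < m) (n v : ℕ) :
    |(#{u ∈ range n | u ≡ v [MOD m]} : ℝ) - n / m| < 1 := by
  have hm' : (0 : ℝ) < m := mod_cast hm
  have hceil : (#{u ∈ range n | u ≡ v [MOD m]} : ℝ) = ⌈((n : ℝ) - (v % m : ℕ)) / m⌉ := by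
    rw [← Nat.count_eq_card_filter_range]
    exact_mod_cast congrArg (Int.cast : ℤ → ℝ) (Nat.count_modEq_card_eq_ceil n hm v)
  have hnonneg : 0 ≤ ((v % m : ℕ) : ℝ) / m := by positivity
  have hlt : ((v % m : ℕ) : ℝ) / m < 1 := (div_lt_one hm').2 (mod_cast Nat.mod_lt v hm)
  have hle := Int.le_ceil (((n : ℝ) - (v % m : ℕ)) / m)
  have hlt' := Int.ceil_lt_add_one (((n : ℝ) - (v % m : ℕ)) / m)
  rw [hceil, abs_lt]
  rw [sub_div] at hle hlt' ⊢
  constructor <;> linarith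

theorem abs_card_range_product_modEq_sub_le {m : ℕ} (hm : 0 < m) (k n a : ℕ) :
    |(#{q ∈ range k ×ˢ range n | q.1 ≡ q.2 + a [MOD m]} : ℝ) - k * n / m| ≤ n := by
  have hfibers : (#{q ∈ range k ×ˢ range n | q.1 ≡ q.2 + a [MOD m]} : ℝ) =
      ∑ v ∈ range n, (#{u ∈ range k | u ≡ v + a [MOD m]} : ℝ) := by
    simp only [card_filter, sum_product_right, Nat.cast_sum]
  calc |(#{q ∈ range k ×ˢ range n | q.1 ≡ q.2 + a [MOD m]} : ℝ) - k * n / m|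
      = |∑ v ∈ range n, ((#{u ∈ range k | u ≡ v + a [MOD m]} : ℝ) - k / m)| := by
        rw [hfibers, sum_sub_distrib, sum_const, card_range, nsmul_eq_mul, mul_comm (k : ℝ),
          mul_div_assoc]
    _ ≤ ∑ v ∈ range n, |(#{u ∈ range k | u ≡ v + a [MOD m]} : ℝ) - k / m| :=
        abs_sum_le_sum_abs _ _
    _ ≤ ∑ _v ∈ range n, (1 : ℝ) :=
        sum_le_sum fun v _ => (abs_card_range_modEq_sub_div_lt_one hm k (v + a)).le
    _ = n := by simp

theorem isCoprime_natCast_sub_of_prime {p x y : ℕ} (hp : p.Prime) (hx : x < p) (hy : y < p)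
    (hxy : x ≠ y) : IsCoprime (p : ℤ) (x - y) := by
  refine (Nat.prime_iff_prime_int.1 hp).irreducible.coprime_iff_not_dvd.2 fun hdvd => hxy ?_
  exact ((Nat.modEq_iff_dvd.2 hdvd).eq_of_lt_of_lt hy hx).symm

theorem stmt_2_general {n m x y : ℕ} (hn : 0 < n) (hm : 0 < m)
    (hxy : IsCoprime (n : ℤ) (x - y)) (a : ℕ) :
    |(#{q ∈ range n ×ˢ range n |
        (q.1 * x + q.2) % n % m ≡ (q.1 * y + q.2) % n % m + a [MOD m]} : ℝ) / (n : ℝ) ^ 2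
      - 1 / (m : ℝ)| ≤ 1 / (n : ℝ) := by
  rw [card_linear_hash_modEq hxy]
  set N : ℝ := (#{q ∈ range n ×ˢ range n | q.1 ≡ q.2 + a [MOD m]} : ℝ)
  have hn' : (0 : ℝ) < n := mod_cast hn
  calc |N / (n : ℝ) ^ 2 - 1 / m| = |(N - n * n / m) / (n : ℝ) ^ 2| := by
        congr 1
        field_simp
    _ = |N - n * n / m| / (n : ℝ) ^ 2 := by rw [abs_div, abs_of_pos (pow_pos hn' 2)]
    _ ≤ n / (n : ℝ) ^ 2 := by
        gcongr
        exact abs_card_range_product_modEq_sub_le hm n n a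
    _ = 1 / n := by field_simp

/-- Universality of linear hashing. For a prime `p`, `1 ≤ m ≤ p`,
distinct keys `x y ∈ [p]` and `a ∈ [m]`, with `h(x) = ((σx + τ) mod p) mod m` for
`σ, τ` uniform in `[p]`, we have `|Pr(h(x) ≡ h(y) + a (mod m)) − 1/m| ≤ 3/p ≤ 3/m`. -/
theorem stmt_2 (p m : ℕ) (hp : p.Prime) (hm : 1 ≤ m) (hmp : m ≤ p)
    (x y : ℕ) (hx : x < p) (hy : y < p) (hxy : x ≠ y) (a : ℕ) (ha : a < m) :
    abs (((((Finset.range p ×ˢ Finset.range p).filter fun στ =>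
          ((στ.1 * x + στ.2) % p) % m ≡ ((στ.1 * y + στ.2) % p) % m + a [MOD m]).card : ℝ)
        / (p : ℝ) ^ 2) - 1 / (m : ℝ)) ≤ 3 / (p : ℝ)
    ∧ abs (((((Finset.range p ×ˢ Finset.range p).filter fun στ =>
          ((στ.1 * x + στ.2) % p) % m ≡ ((στ.1 * y + στ.2) % p) % m + a [MOD m]).card : ℝ)
        / (p : ℝ) ^ 2) - 1 / (m : ℝ)) ≤ 3 / (m : ℝ) := by
  have hbound := (stmt_2_general hp.pos hm (isCoprime_natCast_sub_of_prime hp hx hy hxy) a).trans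
    (by gcongr; norm_num : 1 / (p : ℝ) ≤ 3 / p)
  exact ⟨hbound, hbound.trans (by gcongr)⟩
end

section
/- Let p be a prime, let m be an integer with 1 ≤ m ≤ p, let x, y ∈ {0, …, p−1} be distinct keys, and let a, b ∈ {0, …, m−1}. With h a random linear hash function with parameters p and m, it holds that | Pr( h(x) = a and h(y) = b ) − 1/m² | ≤ 3/(mp). -/
/-!
When `x - y` is a unit modulo `n`, the map `(σ, τ) ↦ (σ x + τ, σ y + τ)` permutes `(ℤ / n)²`, so the
two values before reduction modulo `m` are exactly independent and uniform. Each residue class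
modulo `m` has `n / m` elements below `n` up to an error of at most `1`, and multiplying two such
estimates gives `(n / m)²` up to an error of at most `2 (n / m) + 1 ≤ 3 (n / m)`.
-/

open Finset

section Affine

theorem injective_affine_eval_pair {R : Type*} [Ring R] {x y : R} (hxy : IsUnit (x - y)) :
    Function.Injective fun s : R × R => (s.1 * x + s.2, s.1 * y + s.2) := by
  rintro ⟨σ, τ⟩ ⟨σ', τ'⟩ h
  obtain ⟨eval_x, eval_y⟩ := Prod.mk.inj h
  have slope_mul : σ * (x - y) = σ' * (x - y) := by
    calc σ * (x - y) = (σ * x + τ) - (σ * y + τ) := by noncomm_ring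
      _ = (σ' * x + τ') - (σ' * y + τ') := congrArg₂ (· - ·) eval_x eval_y
      _ = σ' * (x - y) := by noncomm_ring
  obtain rfl : σ = σ' := hxy.mul_right_cancel slope_mul
  exact Prod.ext rfl (add_left_cancel eval_x)

variable {n x y : ℕ}

theorem injOn_affine_eval_pair_mod (hxy : IsCoprime (n : ℤ) (x - y)) :
    Set.InjOn (fun s : ℕ × ℕ => ((s.1 * x + s.2) % n, (s.1 * y + s.2) % n))
      (range n ×ˢ range n : Finset (ℕ × ℕ)) := by
  have sub_isUnit : IsUnit ((x : ZMod n) - y) := by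
    exact_mod_cast (ZMod.coe_int_isUnit_iff_isCoprime (x - y) n).2 hxy
  rintro ⟨σ, τ⟩ hs ⟨σ', τ'⟩ hs' h
  simp only [coe_product, coe_range, Set.mem_prod, Set.mem_Iio] at hs hs'
  obtain ⟨eval_x, eval_y⟩ := Prod.mk.inj h
  have cast_eq : ((σ : ZMod n), (τ : ZMod n)) = ((σ' : ZMod n), (τ' : ZMod n)) := by
    refine injective_affine_eval_pair sub_isUnit (Prod.ext ?_ ?_)
    · simpa only [Nat.cast_add, Nat.cast_mul] using
        (ZMod.natCast_eq_natCast_iff _ _ n).2 eval_x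
    · simpa only [Nat.cast_add, Nat.cast_mul] using
        (ZMod.natCast_eq_natCast_iff _ _ n).2 eval_y
  obtain ⟨slope_eq, intercept_eq⟩ := Prod.mk.inj cast_eq
  rw [ZMod.natCast_eq_natCast_iff] at slope_eq intercept_eq
  exact Prod.ext (slope_eq.eq_of_lt_of_lt hs.1 hs'.1) (intercept_eq.eq_of_lt_of_lt hs.2 hs'.2)

theorem image_affine_eval_pair_mod (hxy : IsCoprime (n : ℤ) (x - y)) :
    (range n ×ˢ range n).image (fun s => ((s.1 * x + s.2) % n, (s.1 * y + s.2) % n)) =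
      range n ×ˢ range n := by
  refine eq_of_subset_of_card_le (image_subset_iff.2 fun s hs => ?_)
    (card_image_of_injOn (injOn_affine_eval_pair_mod hxy)).ge
  have n_pos : 0 < n := Nat.zero_lt_of_lt (mem_range.1 (mem_product.1 hs).1)
  exact mk_mem_product (mem_range.2 (Nat.mod_lt _ n_pos)) (mem_range.2 (Nat.mod_lt _ n_pos))

theorem card_filter_affine_eval_pair_mod (hxy : IsCoprime (n : ℤ) (x - y)) (P Q : ℕ → Prop)
    [DecidablePred P] [DecidablePred Q] :
    #{s ∈ range n ×ˢ range n | P ((s.1 * x + s.2) % n) ∧ Q ((s.1 * y + s.2) % n)} =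
      n.count P * n.count Q := by
  calc #{s ∈ range n ×ˢ range n | P ((s.1 * x + s.2) % n) ∧ Q ((s.1 * y + s.2) % n)}
    _ = #{u ∈ (range n ×ˢ range n).image
          (fun s => ((s.1 * x + s.2) % n, (s.1 * y + s.2) % n)) | P u.1 ∧ Q u.2} := by
      rw [filter_image, card_image_of_injOn]
      exact (injOn_affine_eval_pair_mod hxy).mono (coe_subset.2 (filter_subset _ _))
    _ = n.count P * n.count Q := by
      rw [image_affine_eval_pair_mod hxy, filter_product, card_product,
        Nat.count_eq_card_filter_range, Nat.count_eq_card_filter_range]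

theorem isCoprime_sub_of_prime {p : ℕ} (hp : p.Prime) (hx : x < p) (hy : y < p) (hxy : x ≠ y) :
    IsCoprime (p : ℤ) (x - y) := by
  rw [(Nat.prime_iff_prime_int.1 hp).coprime_iff_not_dvd, ← Nat.modEq_iff_dvd]
  exact fun h => hxy (h.eq_of_lt_of_lt hy hx).symm

end Affine

section Estimates

variable {K : Type*} [Field K] [LinearOrder K] [IsStrictOrderedRing K]

theorem abs_count_modEq_sub_div_le_one {m : ℕ} (hm : 0 < m) (n a : ℕ) :
    |(n.count (· ≡ a [MOD m]) : K) - n / m| ≤ 1 := by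
  have m_pos : (0 : K) < m := by exact_mod_cast hm
  have floor_le : ((n / m : ℕ) : K) ≤ n / m := Nat.cast_div_le
  have lt_floor_add_one : (n : K) / m < (n / m : ℕ) + 1 := by
    rw [div_lt_iff₀' m_pos]
    exact_mod_cast Nat.lt_mul_div_succ n hm
  rw [Nat.count_modEq_card n hm a, abs_le]
  split_ifs <;> push_cast <;> constructor <;> linarith

theorem abs_count_mod_eq_sub_div_le_one {m a : ℕ} (ha : a < m) (n : ℕ) :
    |(n.count (· % m = a) : K) - n / m| ≤ 1 := by
  simpa only [Nat.ModEq, Nat.mod_eq_of_lt ha] using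
    abs_count_modEq_sub_div_le_one (K := K) (Nat.zero_lt_of_lt ha) n a

theorem abs_mul_sub_mul_le_of_abs_sub_le {R : Type*} [CommRing R] [LinearOrder R]
    [IsStrictOrderedRing R] {a b c d δ ε : R} (hac : |a - c| ≤ δ) (hbd : |b - d| ≤ ε) :
    |a * b - c * d| ≤ |c| * ε + δ * |d| + δ * ε := by
  have δ_nonneg : 0 ≤ δ := (abs_nonneg _).trans hac
  calc |a * b - c * d| = |c * (b - d) + (a - c) * d + (a - c) * (b - d)| := by ring_nf
    _ ≤ |c| * |b - d| + |a - c| * |d| + |a - c| * |b - d| := by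
      simpa only [abs_mul] using abs_add_three (c * (b - d)) ((a - c) * d) ((a - c) * (b - d))
    _ ≤ |c| * ε + δ * |d| + δ * ε := by gcongr

theorem abs_mul_div_sq_sub_one_div_sq_le {A B m n : K} (hm : 0 < m) (hmn : m ≤ n)
    (hA : |A - n / m| ≤ 1) (hB : |B - n / m| ≤ 1) :
    |A * B / n ^ 2 - 1 / m ^ 2| ≤ 3 / (m * n) := by
  have n_pos : 0 < n := hm.trans_le hmn
  have one_le_ratio : 1 ≤ n / m := (one_le_div hm).2 hmn
  have product_error : |A * B - n / m * (n / m)| ≤ 3 * (n / m) := by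
    have h := abs_mul_sub_mul_le_of_abs_sub_le hA hB
    rw [abs_of_pos (div_pos n_pos hm)] at h
    linarith
  calc |A * B / n ^ 2 - 1 / m ^ 2| = |(A * B - n / m * (n / m)) / n ^ 2| := by
        congr 1
        field_simp
    _ = |A * B - n / m * (n / m)| / n ^ 2 := by rw [abs_div, abs_of_pos (pow_pos n_pos 2)]
    _ ≤ 3 * (n / m) / n ^ 2 := by gcongr
    _ = 3 / (m * n) := by field_simp

end Estimates

theorem stmt_3_general (n m : ℕ) (hmn : m ≤ n) (x y : ℕ) (hxy : IsCoprime (n : ℤ) (x - y))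
    (a b : ℕ) (ha : a < m) (hb : b < m) :
    |(#{στ ∈ range n ×ˢ range n |
          ((στ.1 * x + στ.2) % n) % m = a ∧ ((στ.1 * y + στ.2) % n) % m = b} : ℝ) / (n : ℝ) ^ 2
        - 1 / (m : ℝ) ^ 2| ≤ 3 / ((m : ℝ) * n) := by
  rw [card_filter_affine_eval_pair_mod hxy (· % m = a) (· % m = b), Nat.cast_mul]
  exact abs_mul_div_sq_sub_one_div_sq_le (Nat.cast_pos.2 (Nat.zero_lt_of_lt ha))
    (Nat.cast_le.2 hmn) (abs_count_mod_eq_sub_div_le_one ha n)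
    (abs_count_mod_eq_sub_div_le_one hb n)

/-- Pairwise independence of linear hashing. For a prime `p`, `1 ≤ m ≤ p`,
distinct keys `x y ∈ [p]` and buckets `a, b ∈ [m]`, with `h(x) = ((σx + τ) mod p) mod m` for
`σ, τ` uniform in `[p]`, we have `|Pr(h(x) = a ∧ h(y) = b) − 1/m²| ≤ 3/(mp)`. -/
theorem stmt_3 (p m : ℕ) (hp : p.Prime) (hm : 1 ≤ m) (hmp : m ≤ p)
    (x y : ℕ) (hx : x < p) (hy : y < p) (hxy : x ≠ y)
    (a b : ℕ) (ha : a < m) (hb : b < m) :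
    abs (((((Finset.range p ×ˢ Finset.range p).filter fun στ =>
          ((στ.1 * x + στ.2) % p) % m = a ∧ ((στ.1 * y + στ.2) % p) % m = b).card : ℝ)
        / (p : ℝ) ^ 2) - 1 / (m : ℝ) ^ 2) ≤ 3 / ((m : ℝ) * p) :=
  stmt_3_general p m hmp x y (isCoprime_sub_of_prime hp hx hy hxy) a b ha hb
end

section
/- Let p be a prime, let m be an integer with 1 ≤ m ≤ p, and let σ, τ ∈ {0, …, p−1} be arbitrary, defining h(x) = ((σx + τ) mod p) mod m. Then for all nonnegative integers x, y there exists an offset o ∈ {−p, 0, p} such that h(x) + h(y) ≡ h(0) + h(x + y) + o (mod m). -/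
/-!
Before the reduction modulo `m`, the residues `(σ x + τ) mod p` satisfy the affine relation modulo
`p`, so the two sides differ by a multiple of `p`. Each side is a sum of two numbers in `[0, p)`, so
that multiple is less than `2 p` in absolute value, leaving only `-p`, `0` and `p`. Reducing modulo
`m` preserves sums up to congruence.
-/

theorem mem_neg_zero_self_of_dvd_of_abs_lt_two_mul {p d : ℤ} (hdvd : p ∣ d) (hlt : |d| < 2 * p) :
    d ∈ ({-p, 0, p} : Finset ℤ) := by
  obtain ⟨k, rfl⟩ := hdvd
  have p_pos : 0 < p := by linarith [abs_nonneg (p * k)]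
  have k_abs_lt : |k| < 2 := by
    rw [abs_mul, abs_of_pos p_pos, mul_comm] at hlt
    exact lt_of_mul_lt_mul_right hlt p_pos.le
  obtain ⟨k_gt, k_lt⟩ := abs_lt.mp k_abs_lt
  interval_cases k <;> simp

theorem abs_emod_add_emod_sub_lt_two_mul {p : ℤ} (hp : 0 < p) (a b c d : ℤ) :
    |a % p + b % p - (c % p + d % p)| < 2 * p := by
  have nonneg (z : ℤ) : 0 ≤ z % p := Int.emod_nonneg z hp.ne'
  have lt (z : ℤ) : z % p < p := Int.emod_lt_of_pos z hp
  rw [abs_lt]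
  constructor <;> linarith [nonneg a, nonneg b, nonneg c, nonneg d, lt a, lt b, lt c, lt d]

theorem emod_add_emod_modEq_add (n a b : ℤ) : a % n + b % n ≡ a + b [ZMOD n] :=
  (Int.mod_modEq a n).add (Int.mod_modEq b n)

theorem exists_emod_add_emod_eq_add_offset {p a b c d : ℤ} (hp : 0 < p)
    (h : a + b ≡ c + d [ZMOD p]) :
    ∃ o ∈ ({-p, 0, p} : Finset ℤ), a % p + b % p = c % p + d % p + o := by
  have residues_modEq : c % p + d % p ≡ a % p + b % p [ZMOD p] :=
    (emod_add_emod_modEq_add p c d).trans (h.symm.trans (emod_add_emod_modEq_add p a b).symm)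
  exact ⟨a % p + b % p - (c % p + d % p),
    mem_neg_zero_self_of_dvd_of_abs_lt_two_mul residues_modEq.dvd
      (abs_emod_add_emod_sub_lt_two_mul hp a b c d),
    (add_sub_cancel _ _).symm⟩

/-- The linear hash function `x ↦ ((σ x + τ) mod p) mod m`, taken over `ℤ` so that offsets can be
negative; on natural numbers `%` on `ℤ` agrees with `%` on `ℕ`. -/
def linearHash (p m σ τ x : ℤ) : ℤ :=
  (σ * x + τ) % p % m

theorem stmt_4_general {p : ℤ} (hp : 0 < p) (m σ τ x y : ℤ) :
    ∃ o ∈ ({-p, 0, p} : Finset ℤ),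
      linearHash p m σ τ x + linearHash p m σ τ y
        ≡ linearHash p m σ τ 0 + linearHash p m σ τ (x + y) + o [ZMOD m] := by
  have affine : (σ * x + τ) + (σ * y + τ) = (σ * 0 + τ) + (σ * (x + y) + τ) := by ring
  obtain ⟨o, ho, residues_eq⟩ := exists_emod_add_emod_eq_add_offset hp (congrArg (· % p) affine)
  refine ⟨o, ho, ?_⟩
  calc linearHash p m σ τ x + linearHash p m σ τ y
    _ ≡ (σ * x + τ) % p + (σ * y + τ) % p [ZMOD m] := emod_add_emod_modEq_add m _ _
    _ = (σ * 0 + τ) % p + (σ * (x + y) + τ) % p + o := residues_eq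
    _ ≡ linearHash p m σ τ 0 + linearHash p m σ τ (x + y) + o [ZMOD m] :=
      (emod_add_emod_modEq_add m _ _).symm.add_right o

/-- Almost-affinity of linear hashing. For a prime `p`, `1 ≤ m ≤ p`
and any fixed `σ, τ ∈ [p]` defining `h(x) = ((σx + τ) mod p) mod m`, for all `x, y ∈ ℕ`
there is an offset `o ∈ {−p, 0, p}` with `h(x) + h(y) ≡ h(0) + h(x+y) + o (mod m)`. -/
theorem stmt_4 (p m : ℕ) (hp : p.Prime) (hm : 1 ≤ m) (hmp : m ≤ p)
    (σ τ : ℕ) (hσ : σ < p) (hτ : τ < p) (x y : ℕ) :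
    ∃ o ∈ ({-(p : ℤ), 0, (p : ℤ)} : Finset ℤ),
      ((((σ * x + τ) % p) % m : ℕ) : ℤ) + ((((σ * y + τ) % p) % m : ℕ) : ℤ)
        ≡ ((((σ * 0 + τ) % p) % m : ℕ) : ℤ) + ((((σ * (x + y) + τ) % p) % m : ℕ) : ℤ) + o
          [ZMOD (m : ℤ)] := by
  exact_mod_cast stmt_4_general (Int.natCast_pos.mpr hp.pos) m σ τ x y
end

section
/- There is a constant m₀ such that the following holds for all integers m ≥ m₀ and U ≥ 2: for any two distinct x, y ∈ {0, …, U−1}, if p is chosen uniformly at random among all primes in the interval [m, 2m], then Pr( x ≡ y (mod p) ) ≤ 2 log₂(U) / m. (In particular, for m ≥ m₀ the interval [m, 2m] contains at least one prime.) -/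
/-!
The primes `p ≥ m` at which distinct `x, y < U` collide are distinct divisors of `|x - y| < U`, so
there are at most `log U / log m` of them, and it remains to find `log 2 / 2 * m / log m` primes in
`[m, 2 * m]`. The Chebyshev bounds on `π (2 * m)` and `π m` are too weak to be subtracted, so we
count as in the Erdős proof of Bertrand's postulate: `4 ^ m ≤ 2 * m * centralBinom m`, the primes up
to `2 * m / 3` contribute at most `4 ^ (2 * m / 3) * exp (o(m))` to `centralBinom m`, no prime in
`(2 * m / 3, m]` divides it, and each prime in `(m, 2 * m]` contributes at most `2 * m`. This gives
`(2 / 3 * log 2 - o(1)) * m / log m` primes, and `1 / 2 < 2 / 3`.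
-/

open Asymptotics Filter Finset Real

theorem pow_card_le_of_forall_prime_dvd {s : Finset ℕ} {m d : ℕ} (hd : d ≠ 0)
    (hprime : ∀ p ∈ s, p.Prime) (hm : ∀ p ∈ s, m ≤ p) (hdvd : ∀ p ∈ s, p ∣ d) :
    m ^ #s ≤ d :=
  calc
    m ^ #s ≤ ∏ p ∈ s, p := pow_card_le_prod s id m hm
    _ ≤ d := Nat.le_of_dvd hd.pos (prod_primes_dvd d (fun p hp => (hprime p hp).prime) hdvd)

theorem pow_card_filter_mod_eq_le {s : Finset ℕ} {m U x y : ℕ} (hprime : ∀ p ∈ s, p.Prime)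
    (hm : ∀ p ∈ s, m ≤ p) (hx : x < U) (hy : y < U) (hxy : x ≠ y) :
    m ^ #{p ∈ s | x % p = y % p} ≤ U := by
  have hdvd : ∀ p ∈ s.filter (fun p => x % p = y % p), p ∣ ((y : ℤ) - x).natAbs := fun p hp =>
    Int.natCast_dvd.1 (Nat.modEq_iff_dvd.1 (mem_filter.1 hp).2)
  calc
    m ^ #{p ∈ s | x % p = y % p} ≤ ((y : ℤ) - x).natAbs :=
      pow_card_le_of_forall_prime_dvd (by omega) (fun p hp => hprime p (mem_filter.1 hp).1)
        (fun p hp => hm p (mem_filter.1 hp).1) hdvd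
    _ ≤ U := by omega

theorem card_filter_mod_eq_div_card_le {s : Finset ℕ} {m U x y : ℕ} {c : ℝ}
    (hprime : ∀ p ∈ s, p.Prime) (hm : ∀ p ∈ s, m ≤ p) (hm_pos : 0 < m) (hc : 0 < c)
    (hcard : c * m ≤ #s * log m) (hx : x < U) (hy : y < U) (hxy : x ≠ y) :
    (#{p ∈ s | x % p = y % p} : ℝ) / #s ≤ log U / (c * m) := by
  have hcm : 0 < c * m := by positivity
  have hlog : log m ≠ 0 := right_ne_zero_of_mul (hcm.trans_le hcard).ne'
  have hcollisions : #{p ∈ s | x % p = y % p} * log m ≤ log U := by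
    rw [← log_pow]
    exact log_le_log (by positivity)
      (mod_cast pow_card_filter_mod_eq_le hprime hm hx hy hxy)
  calc
    (#{p ∈ s | x % p = y % p} : ℝ) / #s
      = #{p ∈ s | x % p = y % p} * log m / (#s * log m) := (mul_div_mul_right _ _ hlog).symm
    _ ≤ log U / (c * m) := by
      have := log_natCast_nonneg U
      gcongr

theorem prod_primesLE_pow_factorization_choose_le {n : ℕ} (hn : 0 < n) (j k : ℕ) :
    ∏ p ∈ k.primesLE, p ^ (n.choose j).factorization p ≤ n ^ n.sqrt * primorial k := by
  rw [← prod_filter_mul_prod_filter_not k.primesLE (· ≤ n.sqrt)]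
  apply mul_le_mul'
  · have hcard : #{p ∈ k.primesLE | p ≤ n.sqrt} ≤ n.sqrt :=
      calc
        #{p ∈ k.primesLE | p ≤ n.sqrt} ≤ #(Icc 1 n.sqrt) := card_le_card fun p hp => by
          have hp := mem_filter.1 hp
          exact mem_Icc.2 ⟨(Nat.prime_of_mem_primesLE hp.1).pos, hp.2⟩
        _ = n.sqrt := by simp
    exact (prod_le_pow_card _ _ _ fun p _ => Nat.pow_factorization_choose_le hn).trans
      (Nat.pow_le_pow_right hn hcard)
  · calc
      ∏ p ∈ k.primesLE with ¬p ≤ n.sqrt, p ^ (n.choose j).factorization p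
        ≤ ∏ p ∈ k.primesLE with ¬p ≤ n.sqrt, p := prod_le_prod' fun p hp => by
          have hp := mem_filter.1 hp
          have hexp : (n.choose j).factorization p ≤ 1 :=
            Nat.factorization_choose_le_one (Nat.sqrt_lt'.1 (not_le.1 hp.2))
          exact (Nat.pow_le_pow_right (Nat.prime_of_mem_primesLE hp.1).pos hexp).trans_eq
            (pow_one p)
      _ ≤ ∏ p ∈ k.primesLE, p :=
        prod_le_prod_of_subset_of_one_le' (filter_subset _ _)
          fun p hp _ => (Nat.prime_of_mem_primesLE hp).pos

theorem centralBinom_eq_prod_mul_prod {n : ℕ} (hn : 2 < n) :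
    n.centralBinom = (∏ p ∈ (2 * n / 3).primesLE, p ^ n.centralBinom.factorization p) *
      ∏ p ∈ Ioc n (2 * n) with p.Prime, p ^ n.centralBinom.factorization p := by
  have hdisj : Disjoint (2 * n / 3).primesLE {p ∈ Ioc n (2 * n) | p.Prime} :=
    disjoint_left.2 fun p hp hp' => by
      have := Nat.mem_primesLE.1 hp
      have := mem_Ioc.1 (mem_filter.1 hp').1
      omega
  rw [← prod_union hdisj]
  refine (Eq.trans ?_ n.prod_pow_factorization_centralBinom).symm
  refine prod_subset (fun p hp => ?_) fun p hp hp' => ?_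
  · simp only [mem_union, Nat.mem_primesLE, mem_filter, mem_Ioc, mem_range] at hp ⊢
    omega
  · simp only [mem_union, Nat.mem_primesLE, mem_filter, mem_Ioc, mem_range] at hp hp'
    suffices n.centralBinom.factorization p = 0 by rw [this, pow_zero]
    by_cases hprime : p.Prime
    · simp only [hprime, and_true] at hp'
      exact Nat.factorization_centralBinom_of_two_mul_self_lt_three_mul hn (by omega) (by omega)
    · exact Nat.factorization_eq_zero_of_not_prime _ hprime

theorem centralBinom_le_pow_card_primes {n : ℕ} (hn : 2 < n) :
    n.centralBinom ≤ (2 * n) ^ (2 * n).sqrt * 4 ^ (2 * n / 3) *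
      (2 * n) ^ #{p ∈ Ioc n (2 * n) | p.Prime} := by
  have hpos : 0 < 2 * n := by omega
  have hsmall : ∏ p ∈ (2 * n / 3).primesLE, p ^ n.centralBinom.factorization p ≤
      (2 * n) ^ (2 * n).sqrt * 4 ^ (2 * n / 3) :=
    (prod_primesLE_pow_factorization_choose_le hpos n _).trans
      (Nat.mul_le_mul_left _ (primorial_le_four_pow _))
  have hlarge : ∏ p ∈ Ioc n (2 * n) with p.Prime, p ^ n.centralBinom.factorization p ≤
      (2 * n) ^ #{p ∈ Ioc n (2 * n) | p.Prime} :=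
    prod_le_pow_card _ _ _ fun p _ => Nat.pow_factorization_choose_le hpos
  exact (centralBinom_eq_prod_mul_prod hn).trans_le (mul_le_mul' hsmall hlarge)

theorem two_thirds_log_two_mul_le_card_primes_mul_log {n : ℕ} (hn : 2 < n) :
    2 / 3 * log 2 * n ≤
      (1 + √(2 * n)) * log (2 * n) + #{p ∈ Ioc n (2 * n) | p.Prime} * log (2 * n) := by
  set N := #{p ∈ Ioc n (2 * n) | p.Prime}
  have hpow : (4 : ℝ) ^ n ≤ (2 * n) * ((2 * n) ^ (2 * n).sqrt * 4 ^ (2 * n / 3) * (2 * n) ^ N) := by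
    exact_mod_cast (Nat.four_pow_le_two_mul_self_mul_centralBinom n (by omega)).trans
      (Nat.mul_le_mul_left _ (centralBinom_le_pow_card_primes hn))
  have hlog : n * log 4 ≤ log (2 * n) +
      ((2 * n).sqrt * log (2 * n) + (2 * n / 3 : ℕ) * log 4 + N * log (2 * n)) := by
    have hn_pos : (0 : ℝ) < n := by positivity
    simpa [log_mul, log_pow, hn_pos.ne'] using log_le_log (by positivity) hpow
  have hlog_four : log 4 = 2 * log 2 := by
    rw [show (4 : ℝ) = 2 ^ 2 by norm_num, log_pow, Nat.cast_two]
  have hlog_nonneg : 0 ≤ log (2 * n) := mod_cast log_natCast_nonneg (2 * n)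
  have hsqrt : (2 * n).sqrt * log (2 * n) ≤ √(2 * n) * log (2 * n) := by
    gcongr
    exact_mod_cast nat_sqrt_le_real_sqrt (a := 2 * n)
  have hthird : (2 * n / 3 : ℕ) * log 4 ≤ 2 * n / 3 * log 4 := by
    gcongr
    exact_mod_cast Nat.cast_div_le (α := ℝ) (m := 2 * n) (n := 3)
  rw [hlog_four] at hlog hthird
  linarith

theorem isLittleO_one_add_sqrt_mul_log :
    (fun x : ℝ => (1 + √x) * log x) =o[atTop] fun x => x := by
  have hone : (fun _ : ℝ => (1 : ℝ)) =O[atTop] fun x => √x :=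
    (isLittleO_const_left.2 (.inr (tendsto_norm_atTop_atTop.comp tendsto_sqrt_atTop))).isBigO
  have hlog : log =o[atTop] fun x => √x := by
    simpa only [sqrt_eq_rpow] using isLittleO_log_rpow_atTop one_half_pos
  refine ((hone.add (isBigO_refl _ _)).mul_isLittleO hlog).congr' .rfl ?_
  filter_upwards [eventually_ge_atTop 0] with x hx using mul_self_sqrt hx

theorem eventually_mul_log_const_mul_le {a b : ℝ} (ha : a < 1) (hb : b ≠ 0) :
    ∀ᶠ x in atTop, a * log (b * x) ≤ log x := by
  filter_upwards [eventually_ne_atTop 0,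
    (tendsto_log_atTop.const_mul_atTop (sub_pos.2 ha)).eventually_ge_atTop (a * log b)]
    with x hx hlog
  rw [log_mul hb hx]
  linarith

theorem eventually_mul_le_card_primes_mul_log_two_mul {c : ℝ} (hc : c < 2 / 3 * log 2) :
    ∀ᶠ n : ℕ in atTop, c * n ≤ #{p ∈ Ioc n (2 * n) | p.Prime} * log (2 * n) := by
  have htwo_mul : Tendsto (fun n : ℕ => 2 * (n : ℝ)) atTop atTop :=
    tendsto_natCast_atTop_atTop.const_mul_atTop two_pos
  have hlittleO := (isLittleO_one_add_sqrt_mul_log.comp_tendsto htwo_mul).bound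
    (half_pos (sub_pos.2 hc))
  filter_upwards [eventually_gt_atTop 2, hlittleO] with n hn hbound
  have herror : (1 + √(2 * n)) * log (2 * n) ≤ (2 / 3 * log 2 - c) / 2 * (2 * n) := by
    simpa using (le_norm_self _).trans hbound
  linarith [two_thirds_log_two_mul_le_card_primes_mul_log hn]

theorem eventually_mul_le_card_primes_mul_log {c : ℝ} (hc_nonneg : 0 ≤ c)
    (hc : c < 2 / 3 * log 2) :
    ∀ᶠ n : ℕ in atTop, c * n ≤ #{p ∈ Ioc n (2 * n) | p.Prime} * log n := by
  obtain ⟨c', hcc', hc'⟩ := exists_between hc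
  have hc'_pos : 0 < c' := hc_nonneg.trans_lt hcc'
  filter_upwards [eventually_mul_le_card_primes_mul_log_two_mul hc',
    tendsto_natCast_atTop_atTop.eventually
      (eventually_mul_log_const_mul_le ((div_lt_one hc'_pos).2 hcc') two_ne_zero)]
    with n hcard hlog
  calc
    c * n = c / c' * (c' * n) := by field_simp
    _ ≤ c / c' * (#{p ∈ Ioc n (2 * n) | p.Prime} * log (2 * n)) := by gcongr
    _ = #{p ∈ Ioc n (2 * n) | p.Prime} * (c / c' * log (2 * n)) := by ring
    _ ≤ #{p ∈ Ioc n (2 * n) | p.Prime} * log n := by gcongr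

/-- Hashing modulo a random prime is universal. There is `m₀` such that
for all `m ≥ m₀`, `U ≥ 2` and distinct `x, y ∈ [U]`: the interval `[m, 2m]` contains a prime,
and for `p` uniform among the primes in `[m, 2m]`, `Pr(x ≡ y (mod p)) ≤ 2 log₂(U) / m`. -/
theorem stmt_6 : ∃ m₀ : ℕ, ∀ m : ℕ, m₀ ≤ m → ∀ U : ℕ, 2 ≤ U →
    ∀ x y : ℕ, x < U → y < U → x ≠ y →
      ((Finset.Icc m (2 * m)).filter Nat.Prime).Nonempty ∧
      ((((Finset.Icc m (2 * m)).filter fun p => p.Prime ∧ x % p = y % p).card : ℝ)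
          / (((Finset.Icc m (2 * m)).filter Nat.Prime).card : ℝ)
        ≤ 2 * Real.logb 2 U / m) := by
  have hlog_two : 0 < log 2 := log_pos one_lt_two
  obtain ⟨m₀, hm₀⟩ := eventually_atTop.1 ((eventually_gt_atTop 0).and
    (eventually_mul_le_card_primes_mul_log (c := log 2 / 2) (by positivity) (by linarith)))
  refine ⟨m₀, fun m hm U _ x y hx hy hxy => ?_⟩
  obtain ⟨hm_pos, hIoc⟩ := hm₀ m hm
  set s := (Icc m (2 * m)).filter Nat.Prime
  have hcard : log 2 / 2 * m ≤ #s * log m := hIoc.trans <|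
    mul_le_mul_of_nonneg_right
      (mod_cast card_le_card (filter_subset_filter _ Ioc_subset_Icc_self)) (log_natCast_nonneg m)
  constructor
  · obtain ⟨p, hprime, hmp, hp⟩ := Nat.exists_prime_lt_and_le_two_mul m hm_pos.ne'
    exact ⟨p, mem_filter.2 ⟨mem_Icc.2 ⟨hmp.le, hp⟩, hprime⟩⟩
  · rw [← filter_filter]
    calc
      (#{p ∈ s | x % p = y % p} : ℝ) / #s ≤ log U / (log 2 / 2 * m) :=
        card_filter_mod_eq_div_card_le (fun p hp => (mem_filter.1 hp).2)
          (fun p hp => (mem_Icc.1 (mem_filter.1 hp).1).1) hm_pos (by positivity) hcard hx hy hxy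
      _ = 2 * logb 2 U / m := by rw [logb]; field_simp
end

section
/- Let p be a prime and let x, y be nonzero integers with |x|, |y| < √(p/2). Then H(x/y) = H_p(x̄ · ȳ^{−1}), where x̄, ȳ denote the residues of x, y modulo p (which are nonzero in ℤ_p). -/
/-- The height of a nonzero rational `q = a/b` in lowest terms is `max |a| |b|`. -/
def ratHeight (q : ℚ) : ℕ := max q.num.natAbs q.den

/-- The height of a residue `x ∈ ℤ_p`: the least `max |a| |b|` over integers `a, b` with
`p ∤ b` and `x = a · b⁻¹` in `ℤ_p`. -/
noncomputable def modularHeight (p : ℕ) (x : ZMod p) : ℕ :=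
  sInf { n : ℕ | ∃ a b : ℤ, ¬ ((p : ℤ) ∣ b) ∧ x = (a : ZMod p) * ((b : ZMod p))⁻¹ ∧
    n = max a.natAbs b.natAbs }

/-!
Two fractions `x / y` and `a / b` that agree modulo `p` satisfy `p ∣ x * b - a * y`, so they agree
in `ℚ` as soon as `|x * b - a * y| < p`. If `x / y` is in lowest terms and both `|a|` and `|b|` are
less than its height `H`, then `|x * b - a * y| < (|x| + |y|) * H`. Hence, when this bound is at
most `p`, a pair `(a, b)` of smaller height cannot represent `x / y` modulo `p`: it would represent
it in `ℚ`, where lowest terms have the least height.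
-/

lemma natAbs_num_intCast_div_le (x y : ℤ) : ((x : ℚ) / y).num.natAbs ≤ x.natAbs := by
  rcases eq_or_ne x 0 with rfl | hx
  · simp
  rcases eq_or_ne y 0 with rfl | hy
  · simp
  · rw [← Rat.divInt_eq_div]
    exact Int.natAbs_le_of_dvd_ne_zero (Rat.num_dvd x hy) hx

lemma den_intCast_div_le_natAbs (x : ℤ) {y : ℤ} (hy : y ≠ 0) : ((x : ℚ) / y).den ≤ y.natAbs := by
  rw [← Rat.divInt_eq_div]
  exact Int.natAbs_le_of_dvd_ne_zero (Rat.den_dvd x y) hy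

lemma ratHeight_intCast_div_le (x : ℤ) {y : ℤ} (hy : y ≠ 0) :
    ratHeight ((x : ℚ) / y) ≤ max x.natAbs y.natAbs :=
  max_le_max (natAbs_num_intCast_div_le x y) (den_intCast_div_le_natAbs x hy)

section ModularHeight

variable {p : ℕ}

lemma modularHeight_intCast_mul_inv_le (a : ℤ) {b : ℤ} (hb : (b : ZMod p) ≠ 0) :
    modularHeight p (a * (b : ZMod p)⁻¹) ≤ max a.natAbs b.natAbs :=
  Nat.sInf_le ⟨a, b, by rwa [← ZMod.intCast_zmod_eq_zero_iff_dvd], rfl, rfl⟩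

lemma exists_modularHeight_eq (hp : p ≠ 1) (z : ZMod p) :
    ∃ a b : ℤ, (b : ZMod p) ≠ 0 ∧ z = a * (b : ZMod p)⁻¹ ∧
      modularHeight p z = max a.natAbs b.natAbs := by
  obtain ⟨c, rfl⟩ := ZMod.intCast_surjective z
  have one_not_dvd : ¬ (p : ℤ) ∣ 1 := by simpa [Int.natCast_dvd] using hp
  obtain ⟨a, b, hb, hab, height_eq⟩ :=
    Nat.sInf_mem (s := { n : ℕ | ∃ a b : ℤ, ¬ ((p : ℤ) ∣ b) ∧
      (c : ZMod p) = (a : ZMod p) * ((b : ZMod p))⁻¹ ∧ n = max a.natAbs b.natAbs })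
      ⟨_, c, 1, one_not_dvd, by simp, rfl⟩
  exact ⟨a, b, by rwa [Ne, ZMod.intCast_zmod_eq_zero_iff_dvd], hab, height_eq⟩

lemma eq_of_intCast_zmod_eq_of_natAbs_add_lt {m n : ℤ} (h : (m : ZMod p) = n)
    (hlt : m.natAbs + n.natAbs < p) : m = n := by
  have hdvd : (p : ℤ) ∣ m - n := by
    rw [← ZMod.intCast_eq_intCast_iff_dvd_sub, h]
  have hsub : (m - n).natAbs < (p : ℤ).natAbs := (Int.natAbs_sub_le m n).trans_lt hlt
  exact sub_eq_zero.mp (Int.eq_zero_of_dvd_of_natAbs_lt_natAbs hdvd hsub)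

lemma intCast_zmod_ne_zero_of_natAbs_mul_self_le (hp : 1 < p) {y : ℤ} (hy : y ≠ 0)
    (hsq : y.natAbs * y.natAbs ≤ p) : (y : ZMod p) ≠ 0 := by
  rw [Ne, ZMod.intCast_zmod_eq_zero_iff_dvd]
  intro hdvd
  have hle : p ≤ y.natAbs := Int.natAbs_le_of_dvd_ne_zero hdvd hy
  nlinarith

variable [Fact p.Prime]

lemma modularHeight_ratCast_le_ratHeight {q : ℚ} (hq : (q.den : ZMod p) ≠ 0) :
    modularHeight p (q : ZMod p) ≤ ratHeight q := by
  simpa [Rat.cast_def, div_eq_mul_inv, ratHeight] using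
    modularHeight_intCast_mul_inv_le q.num (b := q.den) (by simpa using hq)

lemma intCast_div_eq_intCast_div_of_zmod {x y a b : ℤ}
    (hy : (y : ZMod p) ≠ 0) (hb : (b : ZMod p) ≠ 0)
    (h : (x : ZMod p) / y = a / b)
    (hlt : x.natAbs * b.natAbs + a.natAbs * y.natAbs < p) : (x : ℚ) / y = a / b := by
  have hy' : (y : ℚ) ≠ 0 := Int.cast_ne_zero.mpr (by rintro rfl; simp at hy)
  have hb' : (b : ℚ) ≠ 0 := Int.cast_ne_zero.mpr (by rintro rfl; simp at hb)
  have cross_zmod : ((x * b : ℤ) : ZMod p) = (a * y : ℤ) := by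
    exact_mod_cast (div_eq_div_iff hy hb).mp h
  have cross : x * b = a * y :=
    eq_of_intCast_zmod_eq_of_natAbs_add_lt cross_zmod (by simpa only [Int.natAbs_mul] using hlt)
  rw [div_eq_div_iff hy' hb']
  exact_mod_cast cross

lemma ratHeight_le_modularHeight_ratCast {q : ℚ} (hq : (q.den : ZMod p) ≠ 0)
    (hsmall : (q.num.natAbs + q.den) * ratHeight q ≤ p) :
    ratHeight q ≤ modularHeight p (q : ZMod p) := by
  obtain ⟨a, b, hb, hab, height_eq⟩ :=
    exists_modularHeight_eq (Fact.out : p.Prime).ne_one (q : ZMod p)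
  rw [height_eq]
  by_contra! hlt
  obtain ⟨ha_lt, hb_lt⟩ := max_lt_iff.mp hlt
  have cross_lt : q.num.natAbs * b.natAbs + a.natAbs * q.den < p :=
    calc
      q.num.natAbs * b.natAbs + a.natAbs * q.den
        < q.num.natAbs * ratHeight q + ratHeight q * q.den :=
          add_lt_add_of_le_of_lt (Nat.mul_le_mul_left _ hb_lt.le)
            (Nat.mul_lt_mul_of_pos_right ha_lt q.den_pos)
      _ = (q.num.natAbs + q.den) * ratHeight q := by ring
      _ ≤ p := hsmall
  have hq_eq : q = a / b := by
    rw [← q.num_div_den]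
    have hq_mod : (q.num : ZMod p) / (q.den : ℤ) = a / b := by
      simpa [Rat.cast_def, div_eq_mul_inv] using hab
    exact intCast_div_eq_intCast_div_of_zmod (by simpa using hq) hb hq_mod cross_lt
  have hb₀ : b ≠ 0 := by rintro rfl; simp at hb
  exact hlt.not_ge (hq_eq ▸ ratHeight_intCast_div_le a hb₀)

theorem ratHeight_eq_modularHeight_ratCast {q : ℚ}
    (hsmall : (q.num.natAbs + q.den) * ratHeight q ≤ p) :
    ratHeight q = modularHeight p (q : ZMod p) := by
  have den_sq_le : q.den * q.den ≤ p :=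
    (Nat.mul_le_mul (Nat.le_add_left _ _) (le_max_right _ _)).trans hsmall
  have hden : (q.den : ZMod p) ≠ 0 := by
    simpa using intCast_zmod_ne_zero_of_natAbs_mul_self_le (Fact.out : p.Prime).one_lt
      (y := q.den) (by simp) den_sq_le
  exact (ratHeight_le_modularHeight_ratCast hden hsmall).antisymm
    (modularHeight_ratCast_le_ratHeight hden)

end ModularHeight

lemma two_mul_natAbs_sq_lt_of_abs_lt_sqrt {n : ℕ} {x : ℤ}
    (hx : (|x| : ℝ) < Real.sqrt ((n : ℝ) / 2)) : 2 * x.natAbs ^ 2 < n := by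
  have hsq : (|x| : ℝ) ^ 2 < n / 2 := (Real.lt_sqrt (abs_nonneg _)).mp hx
  have : 2 * (x.natAbs : ℝ) ^ 2 < n := by
    rw [Nat.cast_natAbs, Int.cast_abs]
    linarith
  exact_mod_cast this

lemma natAbs_add_mul_max_le_of_abs_lt_sqrt {n : ℕ} {x y : ℤ}
    (hx : (|x| : ℝ) < Real.sqrt ((n : ℝ) / 2)) (hy : (|y| : ℝ) < Real.sqrt ((n : ℝ) / 2)) :
    (x.natAbs + y.natAbs) * max x.natAbs y.natAbs ≤ n := by
  have hx_sq := two_mul_natAbs_sq_lt_of_abs_lt_sqrt hx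
  have hy_sq := two_mul_natAbs_sq_lt_of_abs_lt_sqrt hy
  rcases max_cases x.natAbs y.natAbs with ⟨hmax, hle⟩ | ⟨hmax, hle⟩ <;> rw [hmax] <;> nlinarith

theorem stmt_7_general {p : ℕ} (hp : p.Prime) (x : ℤ) {y : ℤ} (hy : y ≠ 0)
    (hsmall : (x.natAbs + y.natAbs) * max x.natAbs y.natAbs ≤ p) :
    ratHeight ((x : ℚ) / (y : ℚ)) = modularHeight p ((x : ZMod p) * ((y : ZMod p))⁻¹) := by
  have : Fact p.Prime := ⟨hp⟩
  have hq_small : (((x : ℚ) / y).num.natAbs + ((x : ℚ) / y).den) * ratHeight ((x : ℚ) / y) ≤ p :=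
    (Nat.mul_le_mul
      (add_le_add (natAbs_num_intCast_div_le x y) (den_intCast_div_le_natAbs x hy))
      (ratHeight_intCast_div_le x hy)).trans hsmall
  have y_sq_le : y.natAbs * y.natAbs ≤ p :=
    (Nat.mul_le_mul (Nat.le_add_left _ _) (le_max_right _ _)).trans hsmall
  have hy_mod : (y : ZMod p) ≠ 0 :=
    intCast_zmod_ne_zero_of_natAbs_mul_self_le hp.one_lt hy y_sq_le
  rw [ratHeight_eq_modularHeight_ratCast hq_small, ← Rat.divInt_eq_div,
    Rat.cast_divInt_of_ne_zero x hy_mod, div_eq_mul_inv]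

/-- Equivalence of heights. For a prime `p` and nonzero integers `x, y`
with `|x|, |y| < √(p/2)`, we have `H(x/y) = H_p(x̄ · ȳ⁻¹)`. -/
theorem stmt_7 (p : ℕ) (hp : p.Prime) (x y : ℤ) (hx : x ≠ 0) (hy : y ≠ 0)
    (hx' : (|x| : ℝ) < Real.sqrt ((p : ℝ) / 2)) (hy' : (|y| : ℝ) < Real.sqrt ((p : ℝ) / 2)) :
    ratHeight ((x : ℚ) / (y : ℚ)) = modularHeight p ((x : ZMod p) * ((y : ZMod p))⁻¹) := by
  exact stmt_7_general hp x hy (natAbs_add_mul_max_le_of_abs_lt_sqrt hx' hy')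
end

section
/- Let p be a prime and let x̄ ∈ ℤ_p be a nonzero residue. Then H_p(x̄) < √p. -/
/-!
By pigeonhole (Thue's lemma), two of the `(⌊√p⌋ + 1)² > p` pairs `(a, b)` with `0 ≤ a, b ≤ ⌊√p⌋`
have the same value of `a - x b` in `ℤ_p`. Their difference writes `x` as a fraction of height at
most `⌊√p⌋`, and `⌊√p⌋ < √p` because `√p` is irrational.
-/

theorem exists_natAbs_lt_and_zsmul_eq_zsmul {G : Type*} [AddCommGroup G] [Finite G] (g h : G)
    {A B : ℕ} (hAB : Nat.card G < A * B) :
    ∃ a b : ℤ, (a ≠ 0 ∨ b ≠ 0) ∧ a.natAbs < A ∧ b.natAbs < B ∧ a • g = b • h := by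
  have := Fintype.ofFinite G
  obtain ⟨⟨i, j⟩, ⟨i', j'⟩, hne, heq⟩ := Fintype.exists_ne_map_eq_of_card_lt
    (fun u : Fin A × Fin B ↦ ((u.1 : ℕ) : ℤ) • g - ((u.2 : ℕ) : ℤ) • h)
    (by rwa [Fintype.card_prod, Fintype.card_fin, Fintype.card_fin, ← Nat.card_eq_fintype_card])
  refine ⟨(i : ℤ) - i', (j : ℤ) - j', ?_, by omega, by omega, ?_⟩
  · by_contra! hzero
    exact hne (Prod.mk_inj.mpr ⟨Fin.ext (by omega), Fin.ext (by omega)⟩)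
  · rw [sub_smul, sub_smul]
    exact sub_eq_sub_iff_sub_eq_sub.mp heq

theorem not_dvd_of_intCast_eq_mul_intCast {n : ℕ} {x : ZMod n} {a b : ℤ} (hne : a ≠ 0 ∨ b ≠ 0)
    (ha : a.natAbs < n) (hb : b.natAbs < n) (h : (a : ZMod n) = x * b) : ¬ (n : ℤ) ∣ b := by
  intro hdvd
  have hb0 : b = 0 := Int.eq_zero_of_dvd_of_natAbs_lt_natAbs hdvd hb
  have ha_dvd : (n : ℤ) ∣ a := by
    rwa [hb0, Int.cast_zero, mul_zero, ZMod.intCast_zmod_eq_zero_iff_dvd] at h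
  have ha0 : a = 0 := Int.eq_zero_of_dvd_of_natAbs_lt_natAbs ha_dvd ha
  exact hne.elim (· ha0) (· hb0)

section Prime

variable {p : ℕ} [Fact p.Prime]

theorem modularHeight_le_of_intCast_eq_mul_intCast {x : ZMod p} {a b : ℤ}
    (hb : ¬ (p : ℤ) ∣ b) (h : (a : ZMod p) = x * b) :
    modularHeight p x ≤ max a.natAbs b.natAbs := by
  have hb' : (b : ZMod p) ≠ 0 := mt (ZMod.intCast_zmod_eq_zero_iff_dvd b p).mp hb
  exact Nat.sInf_le ⟨a, b, hb, (eq_mul_inv_iff_mul_eq₀ hb').mpr h.symm, rfl⟩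

theorem modularHeight_le_sqrt (x : ZMod p) : modularHeight p x ≤ p.sqrt := by
  have hcard : Nat.card (ZMod p) < (p.sqrt + 1) * (p.sqrt + 1) := by
    simpa only [Nat.card_zmod] using Nat.lt_succ_sqrt p
  obtain ⟨a, b, hne, ha, hb, h⟩ := exists_natAbs_lt_and_zsmul_eq_zsmul 1 x hcard
  have hab : (a : ZMod p) = x * b := by
    simpa only [zsmul_eq_mul, mul_one, mul_comm] using h
  have hsqrt : p.sqrt < p := Nat.sqrt_lt_self (Fact.out : p.Prime).one_lt
  have hb_dvd : ¬ (p : ℤ) ∣ b :=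
    not_dvd_of_intCast_eq_mul_intCast hne (by omega) (by omega) hab
  calc modularHeight p x
      ≤ max a.natAbs b.natAbs := modularHeight_le_of_intCast_eq_mul_intCast hb_dvd hab
    _ ≤ p.sqrt := max_le (Nat.le_of_lt_succ ha) (Nat.le_of_lt_succ hb)

end Prime

/-- For a prime `p` and a nonzero residue `x̄ ∈ ℤ_p`, `H_p(x̄) < √p`. -/
theorem stmt_8 (p : ℕ) (hp : p.Prime) (x : ZMod p) (hx : x ≠ 0) :
    (modularHeight p x : ℝ) < Real.sqrt p := by
  have : Fact p.Prime := ⟨hp⟩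
  calc (modularHeight p x : ℝ)
      ≤ p.sqrt := by exact_mod_cast modularHeight_le_sqrt x
    _ < Real.sqrt p :=
      Real.nat_sqrt_le_real_sqrt.lt_of_ne (hp.irrational_sqrt.ne_nat p.sqrt).symm
end

section
/- There is a universal constant C such that the following holds: for every integer U ≥ 2 and every set X of nonzero integers with X ⊆ {−U, …, U}, we have Σ_{x ∈ X} Σ_{y ∈ X} 1/H(x/y) ≤ C · U · log₂(U). -/
/-!
Cancelling the common factor gives `1 / H(x / y) = gcd(x, y) / max(|x|, |y|)`. This depends only on
`|x|` and `|y|` and is symmetric, so up to a factor `8` the double sum is at most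
`∑_{a ≤ U} (1 / a) ∑_{b ≤ a} gcd(a, b)`. For each divisor `d` of `a`, at most `a / d` of the `b ≤ a`
have `gcd(a, b) = d`; hence the inner sum is at most `a` times the number of divisors of `a`.
Finally, the divisor function has summatory function `∑_{d ≤ U} ⌊U / d⌋ ≤ U (1 + log U)`.
-/

open Finset

lemma ratHeight_div_mul_gcd (x : ℤ) {y : ℤ} (hy : y ≠ 0) :
    ratHeight ((x : ℚ) / y) * x.natAbs.gcd y.natAbs = max x.natAbs y.natAbs := by
  obtain ⟨c, x_eq, y_eq⟩ := Rat.exists_eq_mul_div_num_and_eq_mul_div_den x hy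
  set q : ℚ := x / y
  have x_natAbs : x.natAbs = c.natAbs * q.num.natAbs := by rw [x_eq, Int.natAbs_mul]
  have y_natAbs : y.natAbs = c.natAbs * q.den := by rw [y_eq, Int.natAbs_mul, Int.natAbs_natCast]
  have gcd_eq : x.natAbs.gcd y.natAbs = c.natAbs := by
    rw [x_natAbs, y_natAbs, Nat.gcd_mul_left, q.reduced.gcd_eq_one, mul_one]
  rw [gcd_eq, x_natAbs, y_natAbs, Nat.mul_max_mul_left, ratHeight, mul_comm]

lemma one_div_ratHeight_div (x : ℤ) {y : ℤ} (hy : y ≠ 0) :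
    (1 : ℝ) / ratHeight ((x : ℚ) / y) =
      x.natAbs.gcd y.natAbs / max x.natAbs y.natAbs := by
  have gcd_ne_zero : (x.natAbs.gcd y.natAbs : ℝ) ≠ 0 :=
    Nat.cast_ne_zero.2 (Nat.gcd_pos_of_pos_right _ (Int.natAbs_pos.2 hy)).ne'
  rw [← ratHeight_div_mul_gcd x hy, Nat.cast_mul, div_mul_cancel_right₀ gcd_ne_zero, one_div]

lemma sum_comp_natAbs_le_two_nsmul {M : Type*} [AddCommMonoid M] [PartialOrder M]
    [IsOrderedAddMonoid M] {N : ℕ} {X : Finset ℤ} (hX₀ : ∀ x ∈ X, x ≠ 0)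
    (hX : X ⊆ Icc (-(N : ℤ)) N) {f : ℕ → M} (hf : ∀ n, 0 ≤ f n) :
    ∑ x ∈ X, f x.natAbs ≤ 2 • ∑ n ∈ Ioc 0 N, f n := by
  have natAbs_mem : ∀ x ∈ X, x.natAbs ∈ Ioc 0 N := fun x hx ↦ by
    have := mem_Icc.1 (hX hx)
    have := hX₀ x hx
    rw [mem_Ioc]
    omega
  have card_fiber_le (n : ℕ) : #{x ∈ X | x.natAbs = n} ≤ 2 := by
    have fiber_subset : {x ∈ X | x.natAbs = n} ⊆ {(n : ℤ), -(n : ℤ)} := fun x hx ↦ by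
      simpa only [mem_insert, mem_singleton] using Int.natAbs_eq_iff.1 (mem_filter.1 hx).2
    exact (card_le_card fiber_subset).trans card_le_two
  rw [← sum_fiberwise_of_maps_to' natAbs_mem, smul_sum]
  refine sum_le_sum fun n _ ↦ ?_
  rw [sum_const]
  exact nsmul_le_nsmul_left (hf n) (card_fiber_le n)

lemma sum_sum_le_two_nsmul_sum_sum_filter_le {α M : Type*} [LinearOrder α] [AddCommMonoid M]
    [PartialOrder M] [IsOrderedAddMonoid M] (s : Finset α) {f : α → α → M}
    (hf : ∀ a b, 0 ≤ f a b) (hf_symm : ∀ a b, f a b = f b a) :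
    ∑ a ∈ s, ∑ b ∈ s, f a b ≤ 2 • ∑ a ∈ s, ∑ b ∈ s with b ≤ a, f a b := by
  have upper_eq_lower :
      ∑ a ∈ s, ∑ b ∈ s with ¬b ≤ a, f a b = ∑ a ∈ s, ∑ b ∈ s with b < a, f a b := by
    rw [sum_comm' (t' := s) (s' := fun b ↦ {a ∈ s | a < b})
      (by simp only [mem_filter, not_le]; tauto)]
    exact sum_congr rfl fun b _ ↦ sum_congr rfl fun a _ ↦ hf_symm a b
  calc ∑ a ∈ s, ∑ b ∈ s, f a b
      = ∑ a ∈ s, ∑ b ∈ s with b ≤ a, f a b + ∑ a ∈ s, ∑ b ∈ s with b < a, f a b := by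
        rw [← upper_eq_lower, ← sum_add_distrib]
        simp only [sum_filter_add_sum_filter_not]
    _ ≤ 2 • ∑ a ∈ s, ∑ b ∈ s with b ≤ a, f a b := by
        rw [two_nsmul]
        gcongr with a _ b
        · exact fun _ _ _ ↦ hf _ _
        · exact le_of_lt

lemma sum_gcd_Ioc_le_mul_card_divisors (n : ℕ) : ∑ k ∈ Ioc 0 n, n.gcd k ≤ n * #n.divisors := by
  have gcd_mem : ∀ k ∈ Ioc 0 n, n.gcd k ∈ n.divisors := fun k hk ↦
    Nat.mem_divisors.2 ⟨n.gcd_dvd_left k, by have := mem_Ioc.1 hk; omega⟩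
  have card_fiber_le (d : ℕ) : #{k ∈ Ioc 0 n | n.gcd k = d} ≤ n / d := by
    rw [← Nat.Ioc_filter_dvd_card_eq_div]
    exact card_le_card (monotone_filter_right _ fun k _ hk ↦ hk ▸ n.gcd_dvd_right k)
  calc ∑ k ∈ Ioc 0 n, n.gcd k
      = ∑ d ∈ n.divisors, #{k ∈ Ioc 0 n | n.gcd k = d} * d := by
        simp only [← sum_fiberwise_of_maps_to' gcd_mem fun d ↦ d, sum_const, smul_eq_mul]
    _ ≤ ∑ d ∈ n.divisors, n / d * d := by gcongr with d; exact card_fiber_le d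
    _ ≤ ∑ _d ∈ n.divisors, n := by gcongr; exact Nat.div_mul_le_self ..
    _ = n * #n.divisors := by rw [sum_const, smul_eq_mul, mul_comm]

lemma sum_gcd_div_max_Ioc_le_card_divisors (n : ℕ) :
    ∑ k ∈ Ioc 0 n, (n.gcd k / max n k : ℝ) ≤ #n.divisors := by
  have max_eq : ∀ k ∈ Ioc 0 n, (n.gcd k / max n k : ℝ) = n.gcd k / n := fun k hk ↦ by
    rw [max_eq_left (mem_Ioc.1 hk).2]
  rw [sum_congr rfl max_eq, ← sum_div]
  refine div_le_of_le_mul₀ n.cast_nonneg (Nat.cast_nonneg _) ?_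
  rw [mul_comm]
  exact_mod_cast sum_gcd_Ioc_le_mul_card_divisors n

lemma sum_card_divisors_Ioc_le (N : ℕ) :
    ∑ n ∈ Ioc 0 N, (#n.divisors : ℝ) ≤ N * (1 + Real.log N) := by
  calc ∑ n ∈ Ioc 0 N, (#n.divisors : ℝ)
      = ∑ d ∈ Ioc 0 N, ((N / d : ℕ) : ℝ) := by
        simp only [← ArithmeticFunction.sigma_zero_apply]
        exact_mod_cast ArithmeticFunction.sum_Ioc_sigma0_eq_sum_div N
    _ ≤ ∑ d ∈ Ioc 0 N, (N / d : ℝ) := sum_le_sum fun _ _ ↦ Nat.cast_div_le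
    _ = N * (harmonic N : ℝ) := by
        rw [harmonic_eq_sum_Icc, Rat.cast_sum, mul_sum]
        exact sum_congr rfl fun d _ ↦ by rw [Rat.cast_inv, Rat.cast_natCast, div_eq_mul_inv]
    _ ≤ N * (1 + Real.log N) := by gcongr; exact harmonic_le_one_add_log N

lemma sum_sum_gcd_div_max_Ioc_le (N : ℕ) :
    ∑ a ∈ Ioc 0 N, ∑ b ∈ Ioc 0 N, (a.gcd b / max a b : ℝ) ≤ 2 * (N * (1 + Real.log N)) := by
  have filter_le_eq : ∀ a ∈ Ioc 0 N, {b ∈ Ioc 0 N | b ≤ a} = Ioc 0 a := fun a ha ↦ by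
    ext b
    simp only [mem_filter, mem_Ioc] at ha ⊢
    omega
  calc ∑ a ∈ Ioc 0 N, ∑ b ∈ Ioc 0 N, (a.gcd b / max a b : ℝ)
      ≤ 2 • ∑ a ∈ Ioc 0 N, ∑ b ∈ Ioc 0 N with b ≤ a, (a.gcd b / max a b : ℝ) :=
        sum_sum_le_two_nsmul_sum_sum_filter_le _ (fun _ _ ↦ by positivity)
          fun a b ↦ by rw [Nat.gcd_comm, max_comm]
    _ = 2 * ∑ a ∈ Ioc 0 N, ∑ b ∈ Ioc 0 a, (a.gcd b / max a b : ℝ) := by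
        rw [nsmul_eq_mul, Nat.cast_ofNat, sum_congr rfl fun a ha ↦ by rw [filter_le_eq a ha]]
    _ ≤ 2 * ∑ a ∈ Ioc 0 N, (#a.divisors : ℝ) := by
        gcongr with a
        exact sum_gcd_div_max_Ioc_le_card_divisors a
    _ ≤ 2 * (N * (1 + Real.log N)) := by gcongr; exact sum_card_divisors_Ioc_le N

lemma sum_sum_one_div_ratHeight_le {N : ℕ} {X : Finset ℤ} (hX₀ : ∀ x ∈ X, x ≠ 0)
    (hX : X ⊆ Icc (-(N : ℤ)) N) :
    ∑ x ∈ X, ∑ y ∈ X, (1 : ℝ) / ratHeight ((x : ℚ) / y) ≤ 8 * (N * (1 + Real.log N)) := by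
  let f (a b : ℕ) : ℝ := a.gcd b / max a b
  have f_nonneg (a b : ℕ) : 0 ≤ f a b := by positivity
  calc ∑ x ∈ X, ∑ y ∈ X, (1 : ℝ) / ratHeight ((x : ℚ) / y)
      = ∑ x ∈ X, ∑ y ∈ X, f x.natAbs y.natAbs :=
        sum_congr rfl fun x _ ↦ sum_congr rfl fun y hy ↦ one_div_ratHeight_div x (hX₀ y hy)
    _ ≤ ∑ x ∈ X, 2 • ∑ b ∈ Ioc 0 N, f x.natAbs b :=
        sum_le_sum fun x _ ↦ sum_comp_natAbs_le_two_nsmul hX₀ hX (f_nonneg x.natAbs)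
    _ ≤ 2 • ∑ a ∈ Ioc 0 N, 2 • ∑ b ∈ Ioc 0 N, f a b :=
        sum_comp_natAbs_le_two_nsmul hX₀ hX
          fun a ↦ nsmul_nonneg (sum_nonneg fun b _ ↦ f_nonneg a b) 2
    _ = 4 * ∑ a ∈ Ioc 0 N, ∑ b ∈ Ioc 0 N, f a b := by
        simp only [nsmul_eq_mul, Nat.cast_ofNat, ← mul_sum]
        ring
    _ ≤ 4 * (2 * (N * (1 + Real.log N))) := by gcongr; exact sum_sum_gcd_div_max_Ioc_le N
    _ = 8 * (N * (1 + Real.log N)) := by ring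

lemma one_add_log_le_two_mul_logb_two {x : ℝ} (hx : 2 ≤ x) :
    1 + Real.log x ≤ 2 * Real.logb 2 x := by
  have one_le_logb : 1 ≤ Real.logb 2 x := by
    rwa [Real.le_logb_iff_rpow_le one_lt_two (by linarith), Real.rpow_one]
  have log_le_logb : Real.log x ≤ Real.logb 2 x :=
    le_div_self (Real.log_nonneg (by linarith)) (Real.log_pos one_lt_two)
      (by linarith [Real.log_two_lt_d9])
  linarith

/-- Sum of inverse heights. There is a universal constant `C` such that
for every `U ≥ 2` and every set `X ⊆ {−U, …, U}` of nonzero integers,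
`∑_{x ∈ X} ∑_{y ∈ X} 1/H(x/y) ≤ C · U · log₂ U`. -/
theorem stmt_9 : ∃ C : ℝ, ∀ U : ℕ, 2 ≤ U → ∀ X : Finset ℤ,
    (∀ x ∈ X, x ≠ 0) → X ⊆ Finset.Icc (-(U : ℤ)) (U : ℤ) →
    ∑ x ∈ X, ∑ y ∈ X, (1 : ℝ) / (ratHeight ((x : ℚ) / (y : ℚ)) : ℝ)
      ≤ C * U * Real.logb 2 U := by
  refine ⟨16, fun U hU X hX₀ hX ↦ ?_⟩
  calc ∑ x ∈ X, ∑ y ∈ X, (1 : ℝ) / ratHeight ((x : ℚ) / y)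
      ≤ 8 * (U * (1 + Real.log U)) := sum_sum_one_div_ratHeight_le hX₀ hX
    _ ≤ 8 * (U * (2 * Real.logb 2 U)) := by
        gcongr
        exact one_add_log_le_two_mul_logb_two (by exact_mod_cast hU)
    _ = 16 * U * Real.logb 2 U := by ring
end

section
/- Let p be a prime and let x, y be nonzero coprime integers with |x|, |y| < √p. Let X̄ ⊆ ℤ_p be an interval of size |x|, i.e., X̄ = { ā + ī : i ∈ {0, …, |x|−1} } for some ā ∈ ℤ_p. Then disc( ȳ · x̄^{−1} · X̄ ) ≤ 2, i.e., for every interval Ī ⊆ ℤ_p it holds that | #( ȳ x̄^{−1} X̄ ∩ Ī ) − |x| · |Ī| / p | ≤ 2. -/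
/-!
Replacing `(x, y)` by `(-x, -y)` and reversing the interval, we may take `x > 0` and `y ≥ 0`, and
we lift everything to `ℤ`: an integer `k` reduces into the dilated interval exactly when `x * k`
lies in a *comb* `A + y * i + p * q`, `0 ≤ i < x`. As `0 ≤ y * i < p`, the quotient
`q = ⌊(x * k - A) / p⌋` tells which period of the comb `x * k` lies in, and as `x` and `y` are
coprime each period contains exactly one multiple of `x`. So `k ↦ ⌊(x * k - A) / p⌋` is a monotone
map that is a bijection from the lifted set onto `ℤ`. Hence the lifted set meets `[B, B + r)` in
`⌊(x * (B + r) - A) / p⌋ - ⌊(x * B - A) / p⌋` points up to an error of `1`, and dropping the floors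
costs at most another `1`.
-/

open Finset

lemma existsUnique_mem_Ico_dvd_add_mul {x y : ℤ} (hx : 0 < x) (hco : IsCoprime x y) (c : ℤ) :
    ∃! i, i ∈ Set.Ico 0 x ∧ x ∣ c + y * i := by
  refine existsUnique_of_exists_of_unique ?_ ?_
  · obtain ⟨u, v, huv⟩ := hco
    refine ⟨-(c * v) % x, ⟨Int.emod_nonneg _ hx.ne', Int.emod_lt_of_pos _ hx⟩,
      c * u - y * (-(c * v) / x), ?_⟩
    linear_combination y * Int.mul_ediv_add_emod (-(c * v)) x - c * huv
  · rintro i j ⟨⟨hi0, hix⟩, hi⟩ ⟨⟨hj0, hjx⟩, hj⟩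
    have hdvd : x ∣ y * (i - j) := by simpa [mul_sub] using dvd_sub hi hj
    have habs : |i - j| < x := abs_sub_lt_of_nonneg_of_lt hi0 hix hj0 hjx
    exact sub_eq_zero.1 (Int.eq_zero_of_abs_lt_dvd (hco.dvd_of_dvd_mul_left hdvd) habs)

lemma abs_card_filter_Ico_sub_le_one_of_bijOn {q : ℤ → ℤ} (hq : Monotone q) {S : Set ℤ}
    [DecidablePred (· ∈ S)] (hS : Set.BijOn q S Set.univ) {B C : ℤ} (hBC : B ≤ C) :
    |(#{k ∈ Ico B C | k ∈ S} : ℤ) - (q C - q B)| ≤ 1 := by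
  have hcard : #({k ∈ Ico B C | k ∈ S}.image q) = #{k ∈ Ico B C | k ∈ S} :=
    card_image_of_injOn <| hS.injOn.mono fun k hk => (mem_filter.1 hk).2
  have hupper : {k ∈ Ico B C | k ∈ S}.image q ⊆ Icc (q B) (q C) := by
    intro l hl
    obtain ⟨k, hk, rfl⟩ := mem_image.1 hl
    obtain ⟨hBk, hkC⟩ := mem_Ico.1 (mem_filter.1 hk).1
    exact mem_Icc.2 ⟨hq hBk, hq hkC.le⟩
  have hlower : Ioo (q B) (q C) ⊆ {k ∈ Ico B C | k ∈ S}.image q := by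
    intro l hl
    obtain ⟨hBl, hlC⟩ := mem_Ioo.1 hl
    obtain ⟨k, hkS, rfl⟩ := hS.surjOn (Set.mem_univ l)
    have hk : k ∈ Ico B C := mem_Ico.2 ⟨(hq.reflect_lt hBl).le, hq.reflect_lt hlC⟩
    exact mem_image_of_mem q (mem_filter.2 ⟨hk, hkS⟩)
  have hle := card_le_card hupper
  have hge := card_le_card hlower
  rw [hcard, Int.card_Icc] at hle
  rw [hcard, Int.card_Ioo] at hge
  have hqBC := hq hBC
  rw [abs_le]
  omega

lemma abs_ediv_sub_ediv_sub_div_lt_one (u v : ℤ) (m : ℕ) :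
    |((u / m - v / m : ℤ) : ℝ) - ((u : ℝ) - v) / m| < 1 := by
  have hfloor (w : ℤ) : w / (m : ℤ) = ⌊(w : ℝ) / m⌋ := by
    rw [Int.floor_div_natCast, Int.floor_intCast]
  have hfract : ((u / m - v / m : ℤ) : ℝ) - ((u : ℝ) - v) / m =
      Int.fract ((v : ℝ) / m) - Int.fract ((u : ℝ) / m) := by
    rw [hfloor, hfloor, Int.fract, Int.fract, Int.cast_sub]
    ring
  rw [hfract]
  exact abs_sub_lt_of_nonneg_of_lt (Int.fract_nonneg _) (Int.fract_lt_one _)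
    (Int.fract_nonneg _) (Int.fract_lt_one _)

/-- The integers `k` such that `x * k` is congruent modulo `m` to one of the `x` terms
`A, A + y, …, A + y * (x - 1)` of an arithmetic progression. For `A = y * a` these are the lifts to
`ℤ` of the elements of the interval `{a, …, a + x - 1}` dilated by the residue `y / x`. -/
def progressionQuotients (m : ℕ) (x y A : ℤ) : Set ℤ :=
  {k | ∃ i ∈ Set.Ico 0 x, A + y * i ≡ x * k [ZMOD m]}

section ProgressionQuotients

variable {m : ℕ} {x y A : ℤ}

lemma mul_mem_Ico_of_mul_le (hm : 0 < m) (hy : 0 ≤ y) (hxy : x * y ≤ m) {i : ℤ}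
    (hi : i ∈ Set.Ico 0 x) : y * i ∈ Set.Ico 0 (m : ℤ) := by
  obtain ⟨hi0, hix⟩ := hi
  refine ⟨by positivity, ?_⟩
  rcases hy.eq_or_lt with rfl | hy
  · simpa using hm
  · nlinarith

lemma mem_progressionQuotients_iff_emod (hm : 0 < m) (hy : 0 ≤ y) (hxy : x * y ≤ m) {k : ℤ} :
    k ∈ progressionQuotients m x y A ↔ ∃ i ∈ Set.Ico 0 x, (x * k - A) % m = y * i := by
  refine exists_congr fun i => and_congr_right fun hi => ?_
  obtain ⟨h0, hlt⟩ := mul_mem_Ico_of_mul_le hm hy hxy hi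
  calc A + y * i ≡ x * k [ZMOD m]
      ↔ y * i ≡ x * k - A [ZMOD m] := by
        simp only [Int.modEq_iff_dvd, sub_sub]
    _ ↔ (x * k - A) % m = y * i := by
        rw [Int.ModEq, Int.emod_eq_of_lt h0 hlt, eq_comm]

lemma bijOn_ediv_progressionQuotients (hm : 0 < m) (hx : 0 < x) (hy : 0 ≤ y)
    (hco : IsCoprime x y) (hxy : x * y ≤ m) :
    Set.BijOn (fun k => (x * k - A) / m) (progressionQuotients m x y A) Set.univ := by
  refine ⟨Set.mapsTo_univ _ _, ?_, ?_⟩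
  · intro k hk l hl hkl
    obtain ⟨i, hi, hik⟩ := (mem_progressionQuotients_iff_emod hm hy hxy).1 hk
    obtain ⟨j, hj, hjl⟩ := (mem_progressionQuotients_iff_emod hm hy hxy).1 hl
    set q := (x * k - A) / m
    have hxk : A + m * q + y * i = x * k := by
      linear_combination Int.mul_ediv_add_emod (x * k - A) m - hik
    have hxl : A + m * q + y * j = x * l := by
      linear_combination Int.mul_ediv_add_emod (x * l - A) m - hjl + m * hkl
    have hij : i = j := (existsUnique_mem_Ico_dvd_add_mul hx hco (A + m * q)).unique
      ⟨hi, k, hxk⟩ ⟨hj, l, hxl⟩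
    exact mul_left_cancel₀ hx.ne' (by rw [← hxk, ← hxl, hij])
  · intro q _
    obtain ⟨i, ⟨hi, k, hk⟩, -⟩ := existsUnique_mem_Ico_dvd_add_mul hx hco (A + m * q)
    have hdivmod : (x * k - A) / m = q ∧ (x * k - A) % m = y * i :=
      (Int.ediv_emod_unique (by exact_mod_cast hm)).2
        ⟨by linear_combination hk, mul_mem_Ico_of_mul_le hm hy hxy hi⟩
    exact ⟨k, (mem_progressionQuotients_iff_emod hm hy hxy).2 ⟨i, hi, hdivmod.2⟩, hdivmod.1⟩

open scoped Classical in
lemma abs_card_Ico_progressionQuotients_sub_le_two (hm : 0 < m) (hx : 0 < x) (hy : 0 ≤ y)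
    (hco : IsCoprime x y) (hxy : x * y ≤ m) (B : ℤ) (r : ℕ) :
    |(#{k ∈ Ico B (B + r) | k ∈ progressionQuotients m x y A} : ℝ) - x * r / m| ≤ 2 := by
  set q : ℤ → ℤ := fun k => (x * k - A) / m
  have hmono : Monotone q := fun k l hkl =>
    Int.ediv_le_ediv (by exact_mod_cast hm) (by gcongr)
  have hcount : |(#{k ∈ Ico B (B + r) | k ∈ progressionQuotients m x y A} : ℝ) -
      ((q (B + r) - q B : ℤ) : ℝ)| ≤ 1 := by
    exact_mod_cast abs_card_filter_Ico_sub_le_one_of_bijOn hmono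
      (bijOn_ediv_progressionQuotients hm hx hy hco hxy) (by lia : B ≤ B + r)
  have hfloor : |((q (B + r) - q B : ℤ) : ℝ) - x * r / m| < 1 := by
    convert! abs_ediv_sub_ediv_sub_div_lt_one (x * (B + r) - A) (x * B - A) m using 4
    push_cast
    ring
  linarith [abs_sub_le (#{k ∈ Ico B (B + r) | k ∈ progressionQuotients m x y A} : ℝ)
    ((q (B + r) - q B : ℤ) : ℝ) (x * r / m)]

end ProgressionQuotients

/-- The interval `{a, a + 1, …, a + (r - 1)}` of `ZMod n`. Its elements are distinct
if `r ≤ n`; for `r > n > 0` it is all of `ZMod n`. -/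
def zmodInterval {n : ℕ} (a : ZMod n) (r : ℕ) : Finset (ZMod n) :=
  (range r).image fun i : ℕ => a + (i : ZMod n)

section ZModInterval

variable {n : ℕ}

lemma mem_zmodInterval_iff_exists_int {a z : ZMod n} {r : ℕ} :
    z ∈ zmodInterval a r ↔ ∃ i ∈ Set.Ico 0 (r : ℤ), a + (i : ZMod n) = z := by
  simp only [zmodInterval, mem_image, mem_range]
  constructor
  · rintro ⟨i, hi, rfl⟩
    exact ⟨i, ⟨i.cast_nonneg, by exact_mod_cast hi⟩, by simp⟩
  · rintro ⟨i, ⟨hi0, hir⟩, rfl⟩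
    lift i to ℕ using hi0
    exact ⟨i, by exact_mod_cast hir, by simp⟩

lemma zmodInterval_intCast (B : ℤ) (r : ℕ) :
    zmodInterval (B : ZMod n) r = (Ico B (B + r)).image (Int.cast : ℤ → ZMod n) := by
  ext z
  simp only [mem_zmodInterval_iff_exists_int, mem_image, mem_Ico, Set.mem_Ico]
  constructor
  · rintro ⟨i, hi, rfl⟩
    exact ⟨B + i, by lia, by push_cast; rfl⟩
  · rintro ⟨k, hk, rfl⟩
    exact ⟨k - B, by lia, by push_cast; ring⟩

lemma injOn_intCast_Ico (B : ℤ) {r : ℕ} (hr : r ≤ n) :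
    Set.InjOn (Int.cast : ℤ → ZMod n) (Ico B (B + r)) := by
  intro k hk l hl hkl
  rw [coe_Ico, Set.mem_Ico] at hk hl
  have hdvd : (n : ℤ) ∣ l - k := (ZMod.intCast_eq_intCast_iff_dvd_sub k l n).1 hkl
  have habs : |l - k| < n := abs_lt.2 (by lia)
  exact (sub_eq_zero.1 (Int.eq_zero_of_abs_lt_dvd hdvd habs)).symm

lemma card_inter_zmodInterval_intCast (T : Finset (ZMod n)) (B : ℤ) {r : ℕ} (hr : r ≤ n) :
    #(T ∩ zmodInterval (B : ZMod n) r) = #{k ∈ Ico B (B + r) | ((k : ℤ) : ZMod n) ∈ T} := by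
  rw [zmodInterval_intCast, inter_comm, ← filter_mem_eq_inter, filter_image]
  exact card_image_of_injOn <| (injOn_intCast_Ico B hr).mono (coe_subset.2 (filter_subset _ _))

lemma image_mul_zmodInterval_eq_image_neg_mul (c a : ZMod n) (r : ℕ) :
    (zmodInterval a r).image (c * ·) = (zmodInterval (1 - (r : ZMod n) - a) r).image (-c * ·) := by
  ext z
  simp only [mem_image, mem_zmodInterval_iff_exists_int, Set.mem_Ico, exists_exists_and_eq_and]
  constructor <;>
  · rintro ⟨i, hi, rfl⟩
    exact ⟨r - 1 - i, by lia, by push_cast; ring⟩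

lemma isUnit_intCast_of_mul_eq_of_isCoprime {x y : ℤ} {c : ZMod n} (hc : c * x = y)
    (hco : IsCoprime x y) : IsUnit (x : ZMod n) := by
  obtain ⟨u, v, huv⟩ := hco
  have huv' : (u : ZMod n) * x + v * y = 1 := by exact_mod_cast congrArg (Int.cast : ℤ → ZMod n) huv
  exact IsUnit.of_mul_eq_one (u + v * c) (by linear_combination huv' + v * hc)

lemma intCast_mem_image_mul_zmodInterval_iff {x y : ℤ} {c : ZMod n} (hx : 0 ≤ x)
    (hc : c * x = y) (hco : IsCoprime x y) (A k : ℤ) :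
    (k : ZMod n) ∈ (zmodInterval (A : ZMod n) x.natAbs).image (c * ·) ↔
      k ∈ progressionQuotients n x y (y * A) := by
  simp only [mem_image, mem_zmodInterval_iff_exists_int, exists_exists_and_eq_and,
    Int.natAbs_of_nonneg hx, progressionQuotients, Set.mem_ofPred_eq]
  refine exists_congr fun i => and_congr_right fun _ => ?_
  rw [← ZMod.intCast_eq_intCast_iff, ← (isUnit_intCast_of_mul_eq_of_isCoprime hc hco).mul_right_inj]
  push_cast
  rw [← hc]
  ring_nf

end ZModInterval

section Discrepancy

variable {n : ℕ} [NeZero n] {x y : ℤ} {c : ZMod n}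

lemma abs_card_dilate_inter_sub_le_two_of_pos_of_nonneg (hx : 0 < x) (hy : 0 ≤ y)
    (hc : c * x = y) (hco : IsCoprime x y) (hxy : |x * y| ≤ n) (a b : ZMod n) {r : ℕ}
    (hr : r ≤ n) :
    |(#((zmodInterval a x.natAbs).image (c * ·) ∩ zmodInterval b r) : ℝ) - x.natAbs * r / n| ≤
      2 := by
  classical
  obtain ⟨A, rfl⟩ := ZMod.intCast_surjective a
  obtain ⟨B, rfl⟩ := ZMod.intCast_surjective b
  rw [card_inter_zmodInterval_intCast _ B hr, Nat.cast_natAbs, abs_of_pos hx]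
  simp only [intCast_mem_image_mul_zmodInterval_iff hx.le hc hco]
  exact abs_card_Ico_progressionQuotients_sub_le_two (NeZero.pos n) hx hy hco
    ((le_abs_self _).trans hxy) B r

lemma abs_card_dilate_inter_sub_le_two_of_pos (hx : 0 < x)
    (hc : c * x = y) (hco : IsCoprime x y) (hxy : |x * y| ≤ n) (a b : ZMod n) {r : ℕ}
    (hr : r ≤ n) :
    |(#((zmodInterval a x.natAbs).image (c * ·) ∩ zmodInterval b r) : ℝ) - x.natAbs * r / n| ≤
      2 := by
  rcases le_total 0 y with hy | hy
  · exact abs_card_dilate_inter_sub_le_two_of_pos_of_nonneg hx hy hc hco hxy a b hr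
  · rw [image_mul_zmodInterval_eq_image_neg_mul]
    exact abs_card_dilate_inter_sub_le_two_of_pos_of_nonneg hx (neg_nonneg.2 hy)
      (by rw [Int.cast_neg, ← hc, neg_mul]) hco.neg_right (by rwa [mul_neg, abs_neg]) _ b hr

end Discrepancy

theorem stmt_10_general {n : ℕ} [NeZero n] {x y : ℤ} {c : ZMod n} (hc : c * x = y)
    (hco : IsCoprime x y) (hxy : |x * y| ≤ n) (a b : ZMod n) {r : ℕ} (hr : r ≤ n) :
    |(#((zmodInterval a x.natAbs).image (c * ·) ∩ zmodInterval b r) : ℝ) - x.natAbs * r / n| ≤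
      2 := by
  rcases lt_trichotomy x 0 with hx | rfl | hx
  · simpa only [Int.natAbs_neg] using abs_card_dilate_inter_sub_le_two_of_pos (neg_pos.2 hx)
      (show c * (-x : ℤ) = (-y : ℤ) by rw [Int.cast_neg, Int.cast_neg, ← hc, mul_neg])
      hco.neg_neg (by rwa [neg_mul_neg]) a b hr
  · simp [zmodInterval]
  · exact abs_card_dilate_inter_sub_le_two_of_pos hx hc hco hxy a b hr

lemma abs_mul_lt_of_abs_lt_sqrt {p : ℕ} {x y : ℤ} (hx : (|x| : ℝ) < √p) (hy : (|y| : ℝ) < √p) :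
    |x * y| < p := by
  have hxy : |(x : ℝ)| * |(y : ℝ)| < p :=
    calc |(x : ℝ)| * |(y : ℝ)| < √p * √p := mul_lt_mul'' hx hy (abs_nonneg _) (abs_nonneg _)
      _ = p := Real.mul_self_sqrt p.cast_nonneg
  rw [abs_mul]
  exact_mod_cast hxy

lemma intCast_ne_zero_of_abs_lt_sqrt {p : ℕ} {x : ℤ} (hx0 : x ≠ 0) (hx : (|x| : ℝ) < √p) :
    (x : ZMod p) ≠ 0 := by
  have hxp : |x| < p :=
    calc |x| ≤ |x| * |x| := le_mul_of_one_le_right (abs_nonneg x) (Int.one_le_abs hx0)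
      _ = |x * x| := (abs_mul x x).symm
      _ < p := abs_mul_lt_of_abs_lt_sqrt hx hx
  exact fun h => hx0 (Int.eq_zero_of_abs_lt_dvd ((ZMod.intCast_zmod_eq_zero_iff_dvd x p).1 h) hxp)

/-- Discrepancy of dilated intervals. Let `p` be a prime and let `x, y`
be nonzero coprime integers with `|x|, |y| < √p`. Let `X̄ ⊆ ℤ_p` be an interval of size
`|x|`, i.e. `X̄ = {ā + ī : i < |x|}`. Then `disc(ȳ x̄⁻¹ X̄) ≤ 2`: for every interval
`Ī = {b̄ + ī : i < r}` (`r ≤ p`), `| #(ȳ x̄⁻¹ X̄ ∩ Ī) − |x| · r / p | ≤ 2`. -/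
theorem stmt_10 (p : ℕ) (hp : p.Prime) (x y : ℤ) (hx : x ≠ 0) (hy : y ≠ 0)
    (hco : IsCoprime x y)
    (hxp : (|x| : ℝ) < Real.sqrt p) (hyp : (|y| : ℝ) < Real.sqrt p)
    (a : ZMod p) (b : ZMod p) (r : ℕ) (hr : r ≤ p) :
    abs ((((((Finset.range x.natAbs).image fun i : ℕ => a + (i : ZMod p)).image
            fun s => (y : ZMod p) * ((x : ZMod p))⁻¹ * s) ∩
          ((Finset.range r).image fun i : ℕ => b + (i : ZMod p))).card : ℝ)
        - (x.natAbs : ℝ) * r / p) ≤ 2 := by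
  have : Fact p.Prime := ⟨hp⟩
  exact stmt_10_general (inv_mul_cancel_right₀ (intCast_ne_zero_of_abs_lt_sqrt hx hxp) _) hco
    (abs_mul_lt_of_abs_lt_sqrt hxp hyp).le a b hr
end

section
/- Let p be a prime and let x be an integer with 1 ≤ x < p. Then, in ℤ_p, { ī · x̄^{−1} : i ∈ {0, …, x−1} } = { residue of ⌈ j·p / x ⌉ modulo p : j ∈ {0, …, x−1} }, where x̄ denotes the residue of x modulo p. -/
/-! Since `x * ⌈j * n / x⌉ = j * n + r` with `r = (-(j * n)) mod x`, the residue of `⌈j * n / x⌉`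
modulo `n` is `r * x⁻¹`. As `n` is coprime to `x`, the map `j ↦ r` permutes `{0, …, x - 1}`. -/

theorem natCast_natMod (a : ℤ) {b : ℤ} (hb : b ≠ 0) : (a.natMod b : ℤ) = a % b :=
  Int.toNat_of_nonneg (Int.emod_nonneg a hb)

theorem natCast_mul_ceil_intCast_div (a : ℤ) (x : ℕ) :
    (x : ℤ) * ⌈(a : ℚ) / x⌉ = a + (-a) % x := by
  rw [Rat.ceil_intCast_div_natCast]
  linarith [Int.emod_add_mul_ediv (-a) x]

theorem injOn_natMod_mul_of_isCoprime {u : ℤ} {x : ℕ} (h : IsCoprime (x : ℤ) u) :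
    Set.InjOn (fun j : ℕ => (u * j).natMod x) (Finset.range x) := by
  intro j hj k hk hjk
  rw [Finset.coe_range, Set.mem_Iio] at hj hk
  have hx : (x : ℤ) ≠ 0 := by omega
  have hmul : u * j ≡ u * k [ZMOD x] := by
    rw [Int.ModEq, ← natCast_natMod _ hx, ← natCast_natMod _ hx]
    exact congrArg Nat.cast hjk
  have hdvd : (x : ℤ) ∣ k - j :=
    h.dvd_of_dvd_mul_left (by simpa only [mul_sub] using hmul.dvd)
  exact (Int.natCast_modEq_iff.1 (Int.modEq_of_dvd hdvd)).eq_of_lt_of_lt hj hk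

theorem image_natMod_mul_range_of_isCoprime {u : ℤ} {x : ℕ} (h : IsCoprime (x : ℤ) u) :
    (Finset.range x).image (fun j : ℕ => (u * j).natMod x) = Finset.range x := by
  refine Finset.eq_of_subset_of_card_le (Finset.image_subset_iff.2 fun j hj => ?_)
    (Finset.card_image_of_injOn (injOn_natMod_mul_of_isCoprime h)).ge
  exact Finset.mem_range.2 (Int.natMod_lt (Finset.mem_range.1 hj).ne_bot)

theorem intCast_ceil_mul_div_eq_natMod_mul_inv {n x : ℕ} (h : x.Coprime n) (hx : x ≠ 0) (j : ℕ) :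
    ((⌈((j : ℚ) * n) / x⌉ : ℤ) : ZMod n) = ((-(n : ℤ) * j).natMod x : ZMod n) * (x : ZMod n)⁻¹ := by
  have hremainder : (x : ℤ) * ⌈((j : ℚ) * n) / x⌉ = j * n + (-(n : ℤ) * j).natMod x := by
    rw [natCast_natMod _ (Nat.cast_ne_zero.2 hx), neg_mul, mul_comm (n : ℤ)]
    simpa only [Int.cast_mul, Int.cast_natCast] using natCast_mul_ceil_intCast_div (j * n) x
  have hcast : (x : ZMod n) * (⌈((j : ℚ) * n) / x⌉ : ℤ) = (-(n : ℤ) * j).natMod x := by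
    simpa using congrArg (Int.cast : ℤ → ZMod n) hremainder
  rw [← hcast, mul_right_comm, ZMod.coe_mul_inv_eq_one x h, one_mul]

theorem stmt_11_general {n x : ℕ} (h : x.Coprime n) :
    ((Finset.range x).image fun i : ℕ => (i : ZMod n) * ((x : ZMod n))⁻¹)
      = (Finset.range x).image fun j : ℕ =>
          ((⌈((j : ℚ) * (n : ℚ)) / (x : ℚ)⌉ : ℤ) : ZMod n) := by
  have hcop : IsCoprime (x : ℤ) (-n) := (Nat.isCoprime_iff_coprime.2 h).neg_right
  conv_lhs => rw [← image_natMod_mul_range_of_isCoprime hcop, Finset.image_image]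
  refine Finset.image_congr fun j hj => ?_
  have hx : x ≠ 0 := (Finset.mem_range.1 hj).ne_bot
  exact (intCast_ceil_mul_div_eq_natMod_mul_inv h hx j).symm

/-- For a prime `p` and an integer `1 ≤ x < p`, in `ℤ_p` it holds that
`{ ī · x̄⁻¹ : i ∈ [x] } = { ⌈ j·p / x ⌉ mod p : j ∈ [x] }`. -/
theorem stmt_11 (p : ℕ) (hp : p.Prime) (x : ℕ) (hx1 : 1 ≤ x) (hxp : x < p) :
    ((Finset.range x).image fun i : ℕ => (i : ZMod p) * ((x : ZMod p))⁻¹)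
      = (Finset.range x).image fun j : ℕ =>
          ((⌈((j : ℚ) * (p : ℚ)) / (x : ℚ)⌉ : ℤ) : ZMod p) :=
  stmt_11_general (Nat.coprime_of_lt_prime (Nat.ne_of_gt hx1) hxp hp).symm
end

section
/- Let p be a prime, let x̄, ȳ ∈ ℤ_p be nonzero, and let Ī ⊆ ℤ_p be an arithmetic progression Ī = { ā + ī · b̄ : i ∈ {0, …, r−1} } with b̄ ≠ 0 and 1 ≤ r ≤ p (so |Ī| = r). Then #{ σ̄ ∈ ℤ_p : σ̄ x̄ ∈ Ī and σ̄ ȳ ∈ Ī } ≤ |Ī|²/p + 3·|Ī| / H_p(x̄ ȳ^{−1}) + 2. Equivalently, for σ̄ uniform on ℤ_p, Pr( (σ̄ x̄, σ̄ ȳ) ∈ Ī² ) ≤ |Ī|²/p² + 3|Ī| / (p · H_p(x̄ ȳ^{−1})) + 2/p. -/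
/-!
The pairs `(i, j)` with `σ x = a + i b` and `σ y = a + j b` for a common `σ` lie in a single coset
of the lattice `{(d, e) ∈ ℤ² : d ≡ x y⁻¹ e mod p}`, any two of whose vectors have determinant
divisible by `p`. The length `H` of a shortest nonzero vector `v` of this lattice in the sup norm
is the height of `x y⁻¹`, and `H² ≤ p` by Thue's lemma.

Say that `|v.2| = H`, and cut the box `[0, r]²` into `r / H + 1` slabs of `H` consecutive rows.
A lattice vector parallel to `v` that joins two points of one slab is shorter than `v`, hence
zero, so `w ↦ det (v, w)` separates the points of the coset in a slab. Its values are congruent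
modulo `p` and spread over a range of length at most `H r + H²`, so the coset has at most
`(H r + H²) / p + 1` points in each slab. Finally
`(r / H + 1) ((H r + H²) / p + 1) ≤ r² / p + 3 r / H + 2` because `H² ≤ p`.
-/

section Counting

open Finset

lemma card_le_div_add_one_of_dvd_sub {ι : Type*} {S : Finset ι} {f : ι → ℤ}
    (hf : Set.InjOn f S) {n W : ℕ}
    (hdvd : ∀ s ∈ S, ∀ t ∈ S, (n : ℤ) ∣ f s - f t)
    (hspread : ∀ s ∈ S, ∀ t ∈ S, (f s - f t).natAbs ≤ W) : #S ≤ W / n + 1 := by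
  rcases S.eq_empty_or_nonempty with rfl | hS
  · simp
  obtain ⟨t, ht, hmin⟩ := S.exists_min_image f hS
  rw [← card_range (W / n + 1)]
  refine card_le_card_of_injOn (fun s ↦ (f s - f t).natAbs / n) (fun s hs ↦ ?_)
    fun s hs s' hs' heq ↦ hf hs hs' ?_
  · simpa [Nat.lt_succ_iff] using Nat.div_le_div_right (hspread s hs t ht)
  · have hnatAbs : (f s - f t).natAbs = (f s' - f t).natAbs :=
      Nat.div_left_inj (Int.natCast_dvd.1 (hdvd s hs t ht))
        (Int.natCast_dvd.1 (hdvd s' hs' t ht)) |>.1 heq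
    have := hmin s hs
    have := hmin s' hs'
    omega

lemma div_add_one_mul_div_add_one_le {R H n : ℝ} (hR : 0 ≤ R) (hH : 0 < H) (hHn : H ^ 2 ≤ n) :
    ((H * R + H ^ 2) / n + 1) * (R / H + 1) ≤ R ^ 2 / n + 3 * R / H + 2 := by
  have hn : 0 < n := (pow_pos hH 2).trans_le hHn
  have hsq : H ^ 2 / n ≤ 1 := (div_le_one hn).2 hHn
  have hcross : H * R / n ≤ R / H := by
    rw [div_le_div_iff₀ hn hH]
    nlinarith
  calc ((H * R + H ^ 2) / n + 1) * (R / H + 1)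
      = R ^ 2 / n + 2 * (H * R / n) + R / H + H ^ 2 / n + 1 := by field_simp; ring
    _ ≤ R ^ 2 / n + 2 * (R / H) + R / H + 1 + 1 := by gcongr
    _ = R ^ 2 / n + 3 * R / H + 2 := by ring

end Counting

/-- The sup norm on `ℤ²`, valued in `ℕ` to match `modularHeight`. -/
def supNorm (w : ℤ × ℤ) : ℕ := max w.1.natAbs w.2.natAbs

/-- `v` is a shortest nonzero vector of the plane lattice `Λ` in the sup norm. -/
structure IsShortestVector (Λ : AddSubgroup (ℤ × ℤ)) (v : ℤ × ℤ) : Prop where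
  mem : v ∈ Λ
  ne_zero : v ≠ 0
  supNorm_le : ∀ w ∈ Λ, w ≠ 0 → supNorm v ≤ supNorm w

section PlaneLattice

open Finset

lemma natAbs_fst_le_supNorm (w : ℤ × ℤ) : w.1.natAbs ≤ supNorm w := le_max_left _ _

lemma supNorm_pos {w : ℤ × ℤ} (hw : w ≠ 0) : 0 < supNorm w := by
  rw [Ne, Prod.ext_iff, Prod.fst_zero, Prod.snd_zero] at hw
  rw [supNorm]
  omega

lemma supNorm_swap (w : ℤ × ℤ) : supNorm w.swap = supNorm w := max_comm _ _

variable {Λ : AddSubgroup (ℤ × ℤ)} {n R : ℕ} {v : ℤ × ℤ} {S : Finset (ℤ × ℤ)}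

lemma IsShortestVector.swap (hv : IsShortestVector Λ v) :
    IsShortestVector (Λ.comap (AddEquiv.prodComm : ℤ × ℤ ≃+ ℤ × ℤ).toAddMonoidHom) v.swap where
  mem := hv.mem
  ne_zero h := hv.ne_zero (Prod.swap_injective h)
  supNorm_le w hw hw0 := by
    rw [supNorm_swap, ← supNorm_swap w]
    exact hv.supNorm_le w.swap hw fun h ↦ hw0 (Prod.swap_injective h)

lemma IsShortestVector.eq_zero_of_det_eq_zero (hv : IsShortestVector Λ v)
    (hsnd : v.2.natAbs = supNorm v) {w : ℤ × ℤ} (hw : w ∈ Λ)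
    (hdet : v.1 * w.2 - v.2 * w.1 = 0) (hlt : w.2.natAbs < supNorm v) : w = 0 := by
  by_contra hne
  have hle : w.1.natAbs ≤ w.2.natAbs := by
    have hmul : v.1.natAbs * w.2.natAbs = supNorm v * w.1.natAbs := by
      rw [← hsnd, ← Int.natAbs_mul, ← Int.natAbs_mul, sub_eq_zero.1 hdet]
    exact Nat.le_of_mul_le_mul_left
      (hmul ▸ Nat.mul_le_mul_right _ (natAbs_fst_le_supNorm v)) (by omega)
  exact (hv.supNorm_le w hw hne).not_gt (max_lt (hle.trans_lt hlt) hlt)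

lemma IsShortestVector.card_slab_le (hv : IsShortestVector Λ v) (hsnd : v.2.natAbs = supNorm v)
    (hdet : ∀ w ∈ Λ, (n : ℤ) ∣ v.1 * w.2 - v.2 * w.1)
    (hS : ∀ s ∈ S, ∀ t ∈ S, s - t ∈ Λ)
    (hS₁ : ∀ s ∈ S, ∀ t ∈ S, (s.1 - t.1).natAbs ≤ R)
    (hS₂ : ∀ s ∈ S, ∀ t ∈ S, (s.2 - t.2).natAbs < supNorm v) :
    #S ≤ (supNorm v * R + supNorm v ^ 2) / n + 1 := by
  have det_sub (s t : ℤ × ℤ) : (v.1 * s.2 - v.2 * s.1) - (v.1 * t.2 - v.2 * t.1) =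
      v.1 * (s - t).2 - v.2 * (s - t).1 := by
    simp only [Prod.fst_sub, Prod.snd_sub]
    ring
  apply card_le_div_add_one_of_dvd_sub (f := fun s ↦ v.1 * s.2 - v.2 * s.1)
  · intro s hs t ht heq
    refine sub_eq_zero.1 <|
      hv.eq_zero_of_det_eq_zero hsnd (hS s hs t ht) ?_ (hS₂ s hs t ht)
    rw [← det_sub]
    exact sub_eq_zero.2 heq
  · intro s hs t ht
    rw [det_sub]
    exact hdet _ (hS s hs t ht)
  · intro s hs t ht
    rw [det_sub]
    calc (v.1 * (s - t).2 - v.2 * (s - t).1).natAbs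
        ≤ v.1.natAbs * (s.2 - t.2).natAbs + v.2.natAbs * (s.1 - t.1).natAbs := by
          rw [← Int.natAbs_mul, ← Int.natAbs_mul]
          exact Int.natAbs_sub_le _ _
      _ ≤ supNorm v * supNorm v + supNorm v * R := by
          gcongr
          exacts [natAbs_fst_le_supNorm v, (hS₂ s hs t ht).le, hsnd.le, hS₁ s hs t ht]
      _ = supNorm v * R + supNorm v ^ 2 := by ring

lemma IsShortestVector.card_box_le_mul (hv : IsShortestVector Λ v)
    (hsnd : v.2.natAbs = supNorm v) (hdet : ∀ w ∈ Λ, (n : ℤ) ∣ v.1 * w.2 - v.2 * w.1)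
    (hS : ∀ s ∈ S, ∀ t ∈ S, s - t ∈ Λ) (hbox : S ⊆ Icc 0 (R, R)) :
    #S ≤ ((supNorm v * R + supNorm v ^ 2) / n + 1) * (R / supNorm v + 1) := by
  have hbounds {s : ℤ × ℤ} (hs : s ∈ S) : (0 ≤ s.1 ∧ 0 ≤ s.2) ∧ s.1 ≤ R ∧ s.2 ≤ R :=
    mem_Icc.1 (hbox hs)
  have hmaps : ∀ s ∈ S, s.2.toNat / supNorm v ∈ range (R / supNorm v + 1) := fun s hs ↦ by
    rw [mem_range, Nat.lt_succ_iff]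
    exact Nat.div_le_div_right (by have := hbounds hs; omega)
  have hslab : ∀ k ∈ range (R / supNorm v + 1), #{s ∈ S | s.2.toNat / supNorm v = k} ≤
      (supNorm v * R + supNorm v ^ 2) / n + 1 := fun k _ ↦ by
    apply hv.card_slab_le hsnd hdet
    · exact fun s hs t ht ↦ hS s (mem_of_mem_filter s hs) t (mem_of_mem_filter t ht)
    · intro s hs t ht
      have hs_bounds := hbounds (mem_of_mem_filter s hs)
      have ht_bounds := hbounds (mem_of_mem_filter t ht)
      omega
    · intro s hs t ht
      obtain ⟨hs, hsk⟩ := mem_filter.1 hs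
      obtain ⟨ht, htk⟩ := mem_filter.1 ht
      have hpos := supNorm_pos hv.ne_zero
      rw [Nat.div_eq_iff hpos] at hsk htk
      have hs_bounds := hbounds hs
      have ht_bounds := hbounds ht
      omega
  simpa only [card_range] using card_le_mul_card_image_of_maps_to hmaps _ hslab

lemma IsShortestVector.card_box_le_of_natAbs_snd_eq (hv : IsShortestVector Λ v)
    (hsnd : v.2.natAbs = supNorm v) (hn : supNorm v ^ 2 ≤ n)
    (hdet : ∀ w ∈ Λ, (n : ℤ) ∣ v.1 * w.2 - v.2 * w.1)
    (hS : ∀ s ∈ S, ∀ t ∈ S, s - t ∈ Λ) (hbox : S ⊆ Icc 0 (R, R)) :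
    (#S : ℝ) ≤ (R : ℝ) ^ 2 / n + 3 * R / supNorm v + 2 := by
  have hpos : (0 : ℝ) < supNorm v := by exact_mod_cast supNorm_pos hv.ne_zero
  calc (#S : ℝ)
      ≤ (((supNorm v * R + supNorm v ^ 2) / n : ℕ) + 1) * ((R / supNorm v : ℕ) + 1) := by
        exact_mod_cast hv.card_box_le_mul hsnd hdet hS hbox
    _ ≤ ((supNorm v * R + (supNorm v : ℝ) ^ 2) / n + 1) * ((R : ℝ) / supNorm v + 1) := by
        gcongr
        · exact_mod_cast Nat.cast_div_le (α := ℝ)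
        · exact Nat.cast_div_le
    _ ≤ (R : ℝ) ^ 2 / n + 3 * R / supNorm v + 2 :=
        div_add_one_mul_div_add_one_le R.cast_nonneg hpos (by exact_mod_cast hn)

theorem IsShortestVector.card_box_le (hv : IsShortestVector Λ v) (hn : supNorm v ^ 2 ≤ n)
    (hdet : ∀ w ∈ Λ, (n : ℤ) ∣ v.1 * w.2 - v.2 * w.1)
    (hS : ∀ s ∈ S, ∀ t ∈ S, s - t ∈ Λ) (hbox : S ⊆ Icc 0 (R, R)) :
    (#S : ℝ) ≤ (R : ℝ) ^ 2 / n + 3 * R / supNorm v + 2 := by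
  rcases max_choice v.1.natAbs v.2.natAbs with hfst | hsnd
  · rw [← card_image_of_injective S Prod.swap_injective, ← supNorm_swap]
    refine hv.swap.card_box_le_of_natAbs_snd_eq (hfst.symm.trans (supNorm_swap v).symm)
      (by rwa [supNorm_swap]) (fun w hw ↦ ?_) ?_ ?_
    · simpa only [Prod.fst_swap, Prod.snd_swap, neg_sub] using (hdet w.swap hw).neg_right
    · simp only [forall_mem_image]
      exact fun s hs t ht ↦ hS s hs t ht
    · exact image_subset_iff.2 fun s hs ↦ mem_Icc.2 <| (mem_Icc.1 (hbox hs)).imp And.symm And.symm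
  · exact hv.card_box_le_of_natAbs_snd_eq hsnd.symm hn hdet hS hbox

end PlaneLattice

/-- The lattice of all `(d, e) ∈ ℤ²` with `d = l e` in `ℤ/n`. For prime `n`, its vectors with
`n ∤ e` are the representations `d / e` of `l` as a fraction, and the nonzero ones with `n ∣ e` are
at least as long as `n`, so the height of `l` is the length of a shortest nonzero vector. -/
def modularLattice (n : ℕ) (l : ZMod n) : AddSubgroup (ℤ × ℤ) where
  carrier := {v | (v.1 : ZMod n) = l * v.2}
  zero_mem' := by simp
  add_mem' {v w} hv hw := by
    simp only [Set.mem_ofPred_eq, Prod.fst_add, Prod.snd_add, Int.cast_add] at hv hw ⊢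
    rw [hv, hw, mul_add]
  neg_mem' {v} hv := by
    simp only [Set.mem_ofPred_eq, Prod.fst_neg, Prod.snd_neg, Int.cast_neg] at hv ⊢
    rw [hv, mul_neg]

section ModularLattice

open Finset

variable {n : ℕ} {l : ZMod n} {v w : ℤ × ℤ}

lemma mem_modularLattice : v ∈ modularLattice n l ↔ (v.1 : ZMod n) = l * v.2 := Iff.rfl

lemma dvd_det_of_mem_modularLattice (hv : v ∈ modularLattice n l) (hw : w ∈ modularLattice n l) :
    (n : ℤ) ∣ v.1 * w.2 - v.2 * w.1 := by
  rw [mem_modularLattice] at hv hw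
  rw [← ZMod.intCast_zmod_eq_zero_iff_dvd]
  push_cast
  rw [hv, hw]
  ring

lemma exists_ne_zero_mem_modularLattice_supNorm_le_sqrt [NeZero n] (l : ZMod n) :
    ∃ v ∈ modularLattice n l, v ≠ 0 ∧ supNorm v ≤ n.sqrt := by
  let box : Finset (ℕ × ℕ) := range (n.sqrt + 1) ×ˢ range (n.sqrt + 1)
  have hcard : #(univ : Finset (ZMod n)) < #box := by
    rw [card_univ, ZMod.card, card_product, card_range]
    exact Nat.lt_succ_sqrt n
  obtain ⟨P, hP, Q, hQ, hne, heq⟩ := exists_ne_map_eq_of_card_lt_of_maps_to hcard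
    (f := fun P : ℕ × ℕ ↦ (P.1 : ZMod n) - l * P.2) fun _ _ ↦ mem_coe.2 (mem_univ _)
  simp only [box, mem_product, mem_range] at hP hQ
  refine ⟨((P.1 : ℤ) - Q.1, (P.2 : ℤ) - Q.2), ?_, fun h0 ↦ hne ?_, by grind [supNorm]⟩
  · rw [mem_modularLattice]
    push_cast
    linear_combination heq
  · simp only [Prod.ext_iff, Prod.fst_zero, Prod.snd_zero] at h0 ⊢
    omega

end ModularLattice

section Height

open Finset

variable {p : ℕ} [Fact p.Prime] {l : ZMod p} {v : ℤ × ℤ}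

lemma eq_mul_inv_iff_mem_modularLattice (hv : ¬ (p : ℤ) ∣ v.2) :
    l = v.1 * (v.2 : ZMod p)⁻¹ ↔ v ∈ modularLattice p l := by
  rw [← ZMod.intCast_zmod_eq_zero_iff_dvd] at hv
  rw [mem_modularLattice, eq_mul_inv_iff_mul_eq₀ hv, eq_comm]

lemma modularHeight_le_supNorm_of_not_dvd (hv : v ∈ modularLattice p l)
    (hdvd : ¬ (p : ℤ) ∣ v.2) : modularHeight p l ≤ supNorm v :=
  Nat.sInf_le ⟨v.1, v.2, hdvd, (eq_mul_inv_iff_mem_modularLattice hdvd).2 hv, rfl⟩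

lemma exists_mem_modularLattice_not_dvd_supNorm_le (l : ZMod p) :
    ∃ v ∈ modularLattice p l, ¬ (p : ℤ) ∣ v.2 ∧ supNorm v ≤ p := by
  refine ⟨(l.val, 1), by simp [mem_modularLattice],
    (Nat.prime_iff_prime_int.1 Fact.out).not_dvd_one, ?_⟩
  have := l.val_lt
  grind [supNorm]

lemma modularHeight_le_supNorm (hv : v ∈ modularLattice p l) (hv0 : v ≠ 0) :
    modularHeight p l ≤ supNorm v := by
  by_cases hsnd : (p : ℤ) ∣ v.2
  · have hfst : (p : ℤ) ∣ v.1 := by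
      rw [← ZMod.intCast_zmod_eq_zero_iff_dvd] at hsnd ⊢
      rw [mem_modularLattice.1 hv, hsnd, mul_zero]
    have hdvd : p ∣ supNorm v := by
      rcases max_choice v.1.natAbs v.2.natAbs with h | h <;> rw [supNorm, h]
      exacts [Int.natCast_dvd.1 hfst, Int.natCast_dvd.1 hsnd]
    obtain ⟨w, hw, hw_dvd, hwp⟩ := exists_mem_modularLattice_not_dvd_supNorm_le l
    calc modularHeight p l ≤ supNorm w := modularHeight_le_supNorm_of_not_dvd hw hw_dvd
      _ ≤ p := hwp
      _ ≤ supNorm v := Nat.le_of_dvd (supNorm_pos hv0) hdvd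
  · exact modularHeight_le_supNorm_of_not_dvd hv hsnd

lemma modularHeight_sq_le (l : ZMod p) : modularHeight p l ^ 2 ≤ p := by
  obtain ⟨v, hv, hv0, hle⟩ := exists_ne_zero_mem_modularLattice_supNorm_le_sqrt l
  calc modularHeight p l ^ 2 ≤ p.sqrt ^ 2 := by
        gcongr
        exact (modularHeight_le_supNorm hv hv0).trans hle
    _ ≤ p := p.sqrt_le'

lemma exists_isShortestVector_supNorm_eq_modularHeight (l : ZMod p) :
    ∃ v, IsShortestVector (modularLattice p l) v ∧ supNorm v = modularHeight p l := by
  obtain ⟨w, hw, hw_dvd, -⟩ := exists_mem_modularLattice_not_dvd_supNorm_le l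
  obtain ⟨d, e, hdvd, hl, hH⟩ : modularHeight p l ∈ {m : ℕ | ∃ a b : ℤ, ¬ (p : ℤ) ∣ b ∧
      l = (a : ZMod p) * (b : ZMod p)⁻¹ ∧ m = max a.natAbs b.natAbs} :=
    Nat.sInf_mem ⟨_, w.1, w.2, hw_dvd, (eq_mul_inv_iff_mem_modularLattice hw_dvd).2 hw, rfl⟩
  refine ⟨(d, e), ⟨(eq_mul_inv_iff_mem_modularLattice hdvd).1 hl, ?_, fun u hu hu0 ↦ ?_⟩, hH.symm⟩
  · rintro ⟨⟩
    exact hdvd (dvd_zero _)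
  · exact hH.symm.trans_le (modularHeight_le_supNorm hu hu0)

theorem card_le_of_sub_mem_modularLattice {R : ℕ} {S : Finset (ℤ × ℤ)}
    (hS : ∀ s ∈ S, ∀ t ∈ S, s - t ∈ modularLattice p l) (hbox : S ⊆ Icc 0 (R, R)) :
    (#S : ℝ) ≤ (R : ℝ) ^ 2 / p + 3 * R / modularHeight p l + 2 := by
  obtain ⟨v, hv, hvH⟩ := exists_isShortestVector_supNorm_eq_modularHeight l
  rw [← hvH]
  exact hv.card_box_le (hvH ▸ modularHeight_sq_le l)
    (fun _ hw ↦ dvd_det_of_mem_modularLattice hv.mem hw) hS hbox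

end Height

section Progression

open Finset

variable {p : ℕ} [Fact p.Prime] {x y a b : ZMod p}

lemma sub_mem_modularLattice_of_progression (hy : y ≠ 0) (hb : b ≠ 0) {s t : ZMod p}
    {i j i' j' : ℤ} (hsx : a + i * b = s * x) (hsy : a + j * b = s * y)
    (htx : a + i' * b = t * x) (hty : a + j' * b = t * y) :
    (i, j) - (i', j') ∈ modularLattice p (x * y⁻¹) := by
  have hfst : ((i - i' : ℤ) : ZMod p) * b = (s - t) * x := by
    push_cast
    linear_combination hsx - htx
  have hsnd : ((j - j' : ℤ) : ZMod p) * b = (s - t) * y := by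
    push_cast
    linear_combination hsy - hty
  apply mul_right_cancel₀ hb
  calc ((i - i' : ℤ) : ZMod p) * b = x * y⁻¹ * ((s - t) * y) := by rw [hfst]; field_simp
    _ = x * y⁻¹ * ((j - j' : ℤ) : ZMod p) * b := by rw [← hsnd]; ring

theorem card_le_of_mul_mem_progression (hy : y ≠ 0) (hb : b ≠ 0) {r : ℕ} {F : Finset (ZMod p)}
    (hFx : ∀ s ∈ F, s * x ∈ (range r).image fun i : ℕ ↦ a + (i : ZMod p) * b)
    (hFy : ∀ s ∈ F, s * y ∈ (range r).image fun i : ℕ ↦ a + (i : ZMod p) * b) :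
    (#F : ℝ) ≤ (r : ℝ) ^ 2 / p + 3 * r / modularHeight p (x * y⁻¹) + 2 := by
  simp only [mem_image, mem_range] at hFx hFy
  choose! i hir hi using hFx
  choose! j hjr hj using hFy
  let coords (s : ZMod p) : ℤ × ℤ := (i s, j s)
  have hinj : Set.InjOn coords F := fun s hs t ht heq ↦ by
    have hjeq : j s = j t := Nat.cast_injective (congrArg Prod.snd heq)
    exact mul_right_cancel₀ hy (by rw [← hj s hs, ← hj t ht, hjeq])
  rw [← card_image_of_injOn hinj]
  apply card_le_of_sub_mem_modularLattice
  · simp only [forall_mem_image]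
    intro s hs t ht
    exact sub_mem_modularLattice_of_progression hy hb (by exact_mod_cast hi s hs)
      (by exact_mod_cast hj s hs) (by exact_mod_cast hi t ht) (by exact_mod_cast hj t ht)
  · simp only [image_subset_iff]
    intro s hs
    simp [coords, Prod.le_def, (hir s hs).le, (hjr s hs).le]

end Progression

/-- Let `p` be a prime, `x̄, ȳ ∈ ℤ_p` nonzero, and let
`Ī = {ā + ī·b̄ : i < r}` be an arithmetic progression with `b̄ ≠ 0`, `1 ≤ r ≤ p`. Then
the number of `σ̄ ∈ ℤ_p` with `σ̄x̄ ∈ Ī` and `σ̄ȳ ∈ Ī` is at most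
`r²/p + 3r/H_p(x̄ȳ⁻¹) + 2`; equivalently the probability for uniform `σ̄` is at most
`r²/p² + 3r/(p·H_p(x̄ȳ⁻¹)) + 2/p`. -/
theorem stmt_12 (p : ℕ) (hp : p.Prime) (x y : ZMod p) (hx : x ≠ 0) (hy : y ≠ 0)
    (a b : ZMod p) (hb : b ≠ 0) (r : ℕ) (hr1 : 1 ≤ r) (hrp : r ≤ p) :
    ((((Finset.range p).filter fun s : ℕ =>
          (s : ZMod p) * x ∈ (Finset.range r).image (fun i : ℕ => a + (i : ZMod p) * b) ∧
          (s : ZMod p) * y ∈ (Finset.range r).image (fun i : ℕ => a + (i : ZMod p) * b)).card : ℝ)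
        ≤ (r : ℝ) ^ 2 / p + 3 * r / (modularHeight p (x * y⁻¹) : ℝ) + 2)
    ∧ ((((Finset.range p).filter fun s : ℕ =>
          (s : ZMod p) * x ∈ (Finset.range r).image (fun i : ℕ => a + (i : ZMod p) * b) ∧
          (s : ZMod p) * y ∈ (Finset.range r).image (fun i : ℕ => a + (i : ZMod p) * b)).card : ℝ)
          / p
        ≤ (r : ℝ) ^ 2 / (p : ℝ) ^ 2 + 3 * r / ((p : ℝ) * (modularHeight p (x * y⁻¹) : ℝ))
          + 2 / p) := by
  have : Fact p.Prime := ⟨hp⟩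
  set F := (Finset.range p).filter fun s : ℕ ↦
    (s : ZMod p) * x ∈ (Finset.range r).image (fun i : ℕ ↦ a + (i : ZMod p) * b) ∧
    (s : ZMod p) * y ∈ (Finset.range r).image (fun i : ℕ ↦ a + (i : ZMod p) * b)
  have hinj : Set.InjOn (Nat.cast : ℕ → ZMod p) F :=
    (CharP.natCast_injOn_Iio (ZMod p) p).mono fun s hs ↦
      Finset.mem_range.1 (Finset.mem_filter.1 hs).1
  have hcount : (F.card : ℝ) ≤
      (r : ℝ) ^ 2 / p + 3 * r / (modularHeight p (x * y⁻¹) : ℝ) + 2 := by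
    rw [← Finset.card_image_of_injOn hinj]
    exact card_le_of_mul_mem_progression hy hb
      (Finset.forall_mem_image.2 fun s hs ↦ (Finset.mem_filter.1 hs).2.1)
      (Finset.forall_mem_image.2 fun s hs ↦ (Finset.mem_filter.1 hs).2.2)
  refine ⟨hcount, (div_le_div_of_nonneg_right hcount p.cast_nonneg).trans_eq ?_⟩
  rw [add_div, add_div, div_div, div_div, ← sq, mul_comm (p : ℝ) (modularHeight p _ : ℝ)]
end

section
/- There is a universal constant C such that the following holds. Let U ≥ 2 and let X ⊆ {0, …, U−1} be a set of k ≥ 1 keys. Let p be a prime with p > 4U², let m be an integer with 1 ≤ m ≤ U, let h be a random linear hash function with parameters p and m, fix a key x ∈ {0, …, U−1} with x ∉ X and buckets a, b ∈ {0, …, m−1}, and let y, z ∈ X be chosen independently and uniformly at random (independently of h). Then Pr( h(y) = h(z) = b | h(x) = a ) ≤ 1/m² + C · U · log₂(U) / (m · k²). -/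
/-!
Fix the value `q = (σ x + τ) mod p`. If `(y - x) / (z - x) = r / s` in lowest terms with `|r| ≤ s`,
then `u = (σ z + τ) mod p` and `v = (σ y + τ) mod p` satisfy `s v ≡ r u + (s - r) q` modulo `p`, so
the plane point `(u, v)` lies on one of the lines `s v = r u + (s - r) q + t p`. Among the points
with prescribed residues modulo `m`, the index `t` has a fixed residue modulo `m`, and it determines
the point as long as `u` stays in an interval of length `s m`. In such an interval `t` ranges over
an interval of length about `s`, which leaves about `s / m + 1` points. Summing over the
`p / (s m) + 1` intervals gives `p (1 / m² + O(1 / (s m)))` points. The error is controlled by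
`1 / s = gcd(y - x, z - x) / max(|y - x|, |z - x|)`, and the sum of these ratios over all pairs is
`O(U log U)`, because `∑_{d ≤ e} gcd(d, e) / e` is at most the number of divisors of `e`.
-/

open Finset

lemma card_le_div_add_one_of_modEq {n : ℤ} (hn : 0 < n) {L : ℝ} (hL : 0 ≤ L) {F : Finset ℤ}
    (hmod : ∀ f ∈ F, ∀ g ∈ F, f ≡ g [ZMOD n]) (hdist : ∀ f ∈ F, ∀ g ∈ F, (g - f : ℝ) ≤ L) :
    (#F : ℝ) ≤ L / n + 1 := by
  have hn' : (0 : ℝ) < n := by exact_mod_cast hn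
  obtain rfl | hF := F.eq_empty_or_nonempty
  · simpa using by positivity
  set lo := F.min' hF
  have hlo : lo ∈ F := F.min'_mem hF
  have quotient_mul : ∀ f ∈ F, (f - lo) / n * n = f - lo := fun f hf ↦
    Int.ediv_mul_cancel (hmod lo hlo f hf).dvd
  have card_le : #F ≤ #(Icc 0 ⌊L / n⌋) := by
    refine card_le_card_of_injOn (fun f ↦ (f - lo) / n) (fun f hf ↦ ?_) fun f hf g hg hfg ↦ ?_
    · refine mem_coe.2 (mem_Icc.2 ⟨?_, ?_⟩)
      · exact Int.ediv_nonneg (sub_nonneg.2 (F.min'_le f hf)) hn.le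
      · rw [Int.le_floor, le_div_iff₀ hn']
        calc (((f - lo) / n : ℤ) : ℝ) * n = f - lo := by exact_mod_cast quotient_mul f hf
          _ ≤ L := hdist lo hlo f hf
    · have hf' := quotient_mul f hf
      rw [show (f - lo) / n = (g - lo) / n from hfg, quotient_mul g hg] at hf'
      exact (sub_left_injective hf').symm
  have hfloor : 0 ≤ ⌊L / n⌋ := Int.floor_nonneg.2 (by positivity)
  rw [Int.card_Icc, sub_zero] at card_le
  calc (#F : ℝ) ≤ ((⌊L / n⌋ + 1 : ℤ) : ℝ) := by exact_mod_cast (by lia : (#F : ℤ) ≤ ⌊L / n⌋ + 1)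
    _ ≤ L / n + 1 := by push_cast; gcongr; exact Int.floor_le _

lemma abs_sub_le_of_ediv_eq {u u' n : ℤ} (hn : 0 < n) (h : u / n = u' / n) : |u - u'| ≤ n := by
  have := Int.mul_ediv_add_emod u n
  have := Int.mul_ediv_add_emod u' n
  rw [h] at *
  have := Int.emod_nonneg u hn.ne'
  have := Int.emod_nonneg u' hn.ne'
  have := Int.emod_lt_of_pos u hn
  have := Int.emod_lt_of_pos u' hn
  rw [abs_le]
  constructor <;> linarith

/-- The points `(u, v) ∈ [0, p)²` of the line `s v ≡ r u + c` modulo `p` whose coordinates are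
congruent to `b₁` and `b₂` modulo `m`. -/
noncomputable def modLine (p m r s c b₁ b₂ : ℤ) : Finset (ℤ × ℤ) :=
  {w ∈ Ico 0 p ×ˢ Ico 0 p |
    w.1 ≡ b₁ [ZMOD m] ∧ w.2 ≡ b₂ [ZMOD m] ∧ r * w.1 + c ≡ s * w.2 [ZMOD p]}

/-- The integer `t` such that `s v = r u + c + t p`, for a point `(u, v)` of the line
`s v ≡ r u + c` modulo `p`. It tells which of the parallel lines in the plane the point is on. -/
def lineIndex (p r s c : ℤ) (w : ℤ × ℤ) : ℤ :=
  (s * w.2 - (r * w.1 + c)) / p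

section ModLine

variable {p m r s c b₁ b₂ : ℤ} {w w' : ℤ × ℤ}

lemma mem_modLine : w ∈ modLine p m r s c b₁ b₂ ↔
    ((0 ≤ w.1 ∧ w.1 < p) ∧ 0 ≤ w.2 ∧ w.2 < p) ∧
      w.1 ≡ b₁ [ZMOD m] ∧ w.2 ≡ b₂ [ZMOD m] ∧ r * w.1 + c ≡ s * w.2 [ZMOD p] := by
  simp only [modLine, mem_filter, mem_product, mem_Ico]

lemma lineIndex_mul (hw : w ∈ modLine p m r s c b₁ b₂) :
    lineIndex p r s c w * p = s * w.2 - (r * w.1 + c) :=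
  Int.ediv_mul_cancel (mem_modLine.1 hw).2.2.2.dvd

lemma lineIndex_modEq (hmp : IsCoprime m p) (hw : w ∈ modLine p m r s c b₁ b₂)
    (hw' : w' ∈ modLine p m r s c b₁ b₂) :
    lineIndex p r s c w ≡ lineIndex p r s c w' [ZMOD m] := by
  obtain ⟨-, hu, hv, -⟩ := mem_modLine.1 hw
  obtain ⟨-, hu', hv', -⟩ := mem_modLine.1 hw'
  have mul_modEq : lineIndex p r s c w * p ≡ lineIndex p r s c w' * p [ZMOD m] := by
    rw [lineIndex_mul hw, lineIndex_mul hw']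
    exact ((hv.trans hv'.symm).mul_left s).sub (((hu.trans hu'.symm).mul_left r).add_right c)
  refine Int.modEq_iff_dvd.2 (hmp.dvd_of_dvd_mul_right ?_)
  rw [sub_mul]
  exact mul_modEq.dvd

lemma lineIndex_sub_mul_le (hrs : |r| ≤ s) (hw : w ∈ modLine p m r s c b₁ b₂)
    (hw' : w' ∈ modLine p m r s c b₁ b₂) :
    (lineIndex p r s c w' - lineIndex p r s c w) * p ≤ s * (p + |w.1 - w'.1|) := by
  have hs : 0 ≤ s := (abs_nonneg r).trans hrs
  obtain ⟨⟨-, hv, -⟩, -⟩ := mem_modLine.1 hw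
  obtain ⟨⟨-, -, hv'⟩, -⟩ := mem_modLine.1 hw'
  calc (lineIndex p r s c w' - lineIndex p r s c w) * p
      = s * (w'.2 - w.2) + r * (w.1 - w'.1) := by
        rw [sub_mul, lineIndex_mul hw, lineIndex_mul hw']; ring
    _ ≤ s * (w'.2 - w.2) + |r| * |w.1 - w'.1| := by
        rw [← abs_mul]; gcongr; exact le_abs_self _
    _ ≤ s * p + s * |w.1 - w'.1| := by gcongr; linarith
    _ = s * (p + |w.1 - w'.1|) := by ring

lemma fst_modEq_of_lineIndex_eq (hrs : IsCoprime r s) (hm : m ≠ 0)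
    (hw : w ∈ modLine p m r s c b₁ b₂) (hw' : w' ∈ modLine p m r s c b₁ b₂)
    (h : lineIndex p r s c w = lineIndex p r s c w') : w.1 ≡ w'.1 [ZMOD s * m] := by
  obtain ⟨-, hu, hv, -⟩ := mem_modLine.1 hw
  obtain ⟨-, hu', hv', -⟩ := mem_modLine.1 hw'
  obtain ⟨i, hi⟩ := (hu.trans hu'.symm).dvd
  obtain ⟨j, hj⟩ := (hv.trans hv'.symm).dvd
  have eq_index := lineIndex_mul hw
  rw [h, lineIndex_mul hw'] at eq_index
  have slope : s * j = r * i :=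
    mul_left_cancel₀ hm (by linear_combination eq_index - s * hj + r * hi)
  obtain ⟨k, rfl⟩ : s ∣ i := hrs.symm.dvd_of_dvd_mul_left (slope ▸ dvd_mul_right s j)
  exact Int.modEq_iff_dvd.2 ⟨k, by linear_combination hi⟩

lemma lineIndex_injOn_block (hs : 0 < s) (hrs : IsCoprime r s) (hm : 0 < m) (k : ℤ) :
    Set.InjOn (lineIndex p r s c) ({w ∈ modLine p m r s c b₁ b₂ | w.1 / (s * m) = k} :
      Finset (ℤ × ℤ)) := by
  intro w hw w' hw' h
  obtain ⟨hw, hk⟩ := mem_filter.1 hw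
  obtain ⟨hw', hk'⟩ := mem_filter.1 hw'
  have hfst : w.1 = w'.1 := by
    rw [← Int.mul_ediv_add_emod w.1 (s * m), ← Int.mul_ediv_add_emod w'.1 (s * m), hk, hk',
      fst_modEq_of_lineIndex_eq hrs hm.ne' hw hw' h]
  have eq_index := lineIndex_mul hw
  rw [h, lineIndex_mul hw', hfst] at eq_index
  exact Prod.ext hfst (mul_left_cancel₀ hs.ne' (by linarith))

lemma card_modLine_block_le (hp : 0 < p) (hm : 0 < m) (hmp : IsCoprime m p) (hs : 0 < s)
    (hrs : |r| ≤ s) (hco : IsCoprime r s) (k : ℤ) :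
    (#{w ∈ modLine p m r s c b₁ b₂ | w.1 / (s * m) = k} : ℝ) ≤
      s * (p + s * m) / p / m + 1 := by
  have hp' : (0 : ℝ) < p := by exact_mod_cast hp
  have : (0 : ℝ) < m := by exact_mod_cast hm
  have : (0 : ℝ) < s := by exact_mod_cast hs
  rw [← card_image_of_injOn (lineIndex_injOn_block hs hco hm k)]
  refine card_le_div_add_one_of_modEq hm (by positivity) ?_ ?_
  · simp only [forall_mem_image, mem_filter]
    exact fun w hw w' hw' ↦ lineIndex_modEq hmp hw.1 hw'.1
  · simp only [forall_mem_image, mem_filter]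
    intro w hw w' hw'
    rw [le_div_iff₀ hp']
    have hdist := abs_sub_le_of_ediv_eq (mul_pos hs hm) (hw.2.trans hw'.2.symm)
    have hindex := (lineIndex_sub_mul_le hrs hw.1 hw'.1).trans
      (by gcongr : s * (p + |w.1 - w'.1|) ≤ s * (p + s * m))
    exact_mod_cast hindex

lemma card_modLine_le (hp : 0 < p) (hm : 0 < m) (hmp : IsCoprime m p) (hs : 0 < s)
    (hrs : |r| ≤ s) (hco : IsCoprime r s) :
    (#(modLine p m r s c b₁ b₂) : ℝ) ≤ (p / (s * m) + 1) * (s * (p + s * m) / p / m + 1) := by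
  have : (0 : ℝ) < p := by exact_mod_cast hp
  have : (0 : ℝ) < m := by exact_mod_cast hm
  have : (0 : ℝ) < s := by exact_mod_cast hs
  have hsm : 0 < s * m := mul_pos hs hm
  have block_mem : ∀ w ∈ modLine p m r s c b₁ b₂, w.1 / (s * m) ∈ Icc 0 (p / (s * m)) := by
    intro w hw
    obtain ⟨⟨⟨hu, hup⟩, -⟩, -⟩ := mem_modLine.1 hw
    exact mem_Icc.2 ⟨Int.ediv_nonneg hu hsm.le, Int.ediv_le_ediv hsm hup.le⟩
  have card_blocks : (#(Icc 0 (p / (s * m))) : ℝ) ≤ p / (s * m) + 1 := by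
    have hquot := Int.ediv_nonneg hp.le hsm.le
    have hcard : (#(Icc 0 (p / (s * m))) : ℤ) = p / (s * m) + 1 := by rw [Int.card_Icc]; lia
    have hfloor : ((p / (s * m) : ℤ) : ℝ) ≤ p / (s * m) := by
      rw [le_div_iff₀ (by positivity)]
      exact_mod_cast Int.ediv_mul_le p hsm.ne'
    calc (#(Icc 0 (p / (s * m))) : ℝ) = (p / (s * m) : ℤ) + 1 := by exact_mod_cast hcard
      _ ≤ p / (s * m) + 1 := by gcongr
  calc (#(modLine p m r s c b₁ b₂) : ℝ)
      = ∑ k ∈ Icc 0 (p / (s * m)), (#{w ∈ modLine p m r s c b₁ b₂ | w.1 / (s * m) = k} : ℝ) := by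
        exact_mod_cast card_eq_sum_card_fiberwise block_mem
    _ ≤ ∑ _k ∈ Icc 0 (p / (s * m)), (s * (p + s * m) / p / m + 1 : ℝ) :=
        sum_le_sum fun k _ ↦ card_modLine_block_le hp hm hmp hs hrs hco k
    _ = #(Icc 0 (p / (s * m))) * (s * (p + s * m) / p / m + 1 : ℝ) := by
        rw [sum_const, nsmul_eq_mul]
    _ ≤ (p / (s * m) + 1) * (s * (p + s * m) / p / m + 1) := by gcongr

lemma card_modLine_le_of_four_mul_le (hp : 0 < p) (hm : 0 < m) (hmp : IsCoprime m p) (hs : 0 < s)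
    (hrs : |r| ≤ s) (hco : IsCoprime r s) (hsp : 4 * s ^ 2 ≤ p) (hsmp : 4 * (s * m) ≤ p) :
    (#(modLine p m r s c b₁ b₂) : ℝ) ≤ p / m ^ 2 + 2 * p / (s * m) := by
  have hp' : (0 : ℝ) < p := by exact_mod_cast hp
  have hm' : (0 : ℝ) < m := by exact_mod_cast hm
  have : (0 : ℝ) < s := by exact_mod_cast hs
  have hsp' : 4 * (s : ℝ) ^ 2 ≤ p := by exact_mod_cast hsp
  have hsmp' : 4 * (s * m : ℝ) ≤ p := by exact_mod_cast hsmp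
  have s_div_m_le : (s / m : ℝ) ≤ p / (s * m) / 4 := by
    rw [div_div, div_le_div_iff₀ hm' (by positivity)]
    nlinarith
  have sq_div_p_le : (s ^ 2 / p : ℝ) ≤ 1 / 4 := by
    rw [div_le_div_iff₀ hp' four_pos]; linarith
  have one_le : (1 : ℝ) ≤ p / (s * m) / 4 := by
    rw [div_div, le_div_iff₀ (by positivity)]; linarith
  calc (#(modLine p m r s c b₁ b₂) : ℝ)
      ≤ (p / (s * m) + 1) * (s * (p + s * m) / p / m + 1) :=
        card_modLine_le hp hm hmp hs hrs hco
    _ = p / m ^ 2 + p / (s * m) + 2 * (s / m) + s ^ 2 / p + 1 := by field_simp; ring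
    _ ≤ p / m ^ 2 + 2 * (p / (s * m)) := by linarith
    _ = p / m ^ 2 + 2 * p / (s * m) := by ring

end ModLine

/-- The value `(σ v + τ) mod p` at the key `v` of the linear hash function with coefficients
`w = (σ, τ)`, before its reduction modulo the number of buckets. -/
def preHash (p : ℕ) (w : ℕ × ℕ) (v : ℕ) : ℕ :=
  (w.1 * v + w.2) % p

/-- The coefficients `(σ, τ) ∈ [0, p)²` of the linear hash functions that send the key `x` to `q`
before the reduction modulo the number of buckets. -/
def preHashFiber (p x q : ℕ) : Finset (ℕ × ℕ) :=
  {w ∈ range p ×ˢ range p | preHash p w x = q}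

section PreHash

variable {p x q : ℕ} {w w' : ℕ × ℕ}

lemma mem_preHashFiber :
    w ∈ preHashFiber p x q ↔ (w.1 < p ∧ w.2 < p) ∧ preHash p w x = q := by
  simp only [preHashFiber, mem_filter, mem_product, mem_range]

lemma natCast_preHash_modEq (p : ℕ) (w : ℕ × ℕ) (v : ℕ) :
    (preHash p w v : ℤ) ≡ w.1 * v + w.2 [ZMOD p] := by
  rw [preHash]
  push_cast
  exact Int.mod_modEq _ _

lemma eq_of_fst_eq_of_mem_preHashFiber (hw : w ∈ preHashFiber p x q)
    (hw' : w' ∈ preHashFiber p x q) (h : w.1 = w'.1) : w = w' := by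
  obtain ⟨⟨-, hτ⟩, hq⟩ := mem_preHashFiber.1 hw
  obtain ⟨⟨-, hτ'⟩, hq'⟩ := mem_preHashFiber.1 hw'
  have hmod : w.1 * x + w.2 ≡ w.1 * x + w'.2 [MOD p] := by
    rw [preHash, h] at hq
    rw [h]
    exact hq.trans hq'.symm
  exact Prod.ext h ((Nat.ModEq.add_left_cancel' _ hmod).eq_of_lt_of_lt hτ hτ')

lemma card_preHashFiber (hq : q < p) : #(preHashFiber p x q) = p := by
  have hp : 0 < p := (Nat.zero_le q).trans_lt hq
  conv_rhs => rw [← card_range p]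
  refine card_nbij Prod.fst (fun w hw ↦ ?_)
    (fun w hw w' hw' ↦ eq_of_fst_eq_of_mem_preHashFiber hw hw') fun σ hσ ↦ ?_
  · exact mem_coe.2 (mem_range.2 (mem_preHashFiber.1 hw).1.1)
  · refine ⟨(σ, (q + σ * (p - 1) * x) % p), mem_coe.2 (mem_preHashFiber.2 ⟨⟨?_, ?_⟩, ?_⟩), rfl⟩
    · exact mem_range.1 hσ
    · exact Nat.mod_lt _ hp
    · have hsum : σ * x + (q + σ * (p - 1) * x) = q + p * (σ * x) := by
        obtain ⟨n, rfl⟩ := Nat.exists_eq_add_one.2 hp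
        rw [Nat.add_sub_cancel]
        ring
      rw [preHash, Nat.add_mod_mod, hsum, Nat.add_mul_mod_self_left, Nat.mod_eq_of_lt hq]

lemma preHash_injOn_preHashFiber {z : ℕ} (hzx : IsCoprime ((z : ℤ) - x) p) :
    Set.InjOn (fun w ↦ preHash p w z) (preHashFiber p x q : Set (ℕ × ℕ)) := by
  intro w hw w' hw' h
  have hz : (w.1 * z + w.2 : ℤ) ≡ w'.1 * z + w'.2 [ZMOD p] :=
    (natCast_preHash_modEq p w z).symm.trans
      ((congrArg Nat.cast h : (preHash p w z : ℤ) = preHash p w' z) ▸ natCast_preHash_modEq p w' z)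
  have hx : (w.1 * x + w.2 : ℤ) ≡ w'.1 * x + w'.2 [ZMOD p] := by
    have hq := (mem_preHashFiber.1 hw).2.trans (mem_preHashFiber.1 hw').2.symm
    exact (natCast_preHash_modEq p w x).symm.trans (hq ▸ natCast_preHash_modEq p w' x)
  have hdvd : (p : ℤ) ∣ (w'.1 - w.1) * (z - x) := by
    have hdiff : (w'.1 * z + w'.2 - (w.1 * z + w.2) - (w'.1 * x + w'.2 - (w.1 * x + w.2)) : ℤ) =
        (w'.1 - w.1) * (z - x) := by ring
    exact hdiff ▸ dvd_sub hz.dvd hx.dvd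
  have hfst : w.1 ≡ w'.1 [MOD p] :=
    Int.natCast_modEq_iff.1 (Int.modEq_iff_dvd.2 (hzx.symm.dvd_of_dvd_mul_right hdvd))
  exact eq_of_fst_eq_of_mem_preHashFiber hw hw' (hfst.eq_of_lt_of_lt
    (mem_preHashFiber.1 hw).1.1 (mem_preHashFiber.1 hw').1.1)

lemma preHash_pair_mem_modLine {m b₁ b₂ y z : ℕ} {r s : ℤ} (hp : 0 < p)
    (hrs : s * ((y : ℤ) - x) = r * ((z : ℤ) - x)) (hx : preHash p w x = q)
    (hy : preHash p w y % m = b₁) (hz : preHash p w z % m = b₂) :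
    ((preHash p w z : ℤ), (preHash p w y : ℤ)) ∈ modLine p m r s ((s - r) * q) b₂ b₁ := by
  have preHash_lt (v : ℕ) : (preHash p w v : ℤ) < p := by exact_mod_cast Nat.mod_lt _ hp
  have hbucket {v b : ℕ} (hv : preHash p w v % m = b) : (preHash p w v : ℤ) ≡ b [ZMOD m] := by
    rw [← hv]
    push_cast
    exact (Int.mod_modEq _ _).symm
  refine mem_modLine.2 ⟨⟨⟨by positivity, preHash_lt z⟩, by positivity, preHash_lt y⟩,
    hbucket hz, hbucket hy, ?_⟩
  have hline : r * (w.1 * z + w.2) + (s - r) * (w.1 * x + w.2) = s * (w.1 * y + w.2 : ℤ) := by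
    linear_combination -(w.1 : ℤ) * hrs
  calc r * (preHash p w z : ℤ) + (s - r) * q
      ≡ r * (w.1 * z + w.2) + (s - r) * (w.1 * x + w.2) [ZMOD p] :=
        ((natCast_preHash_modEq p w z).mul_left r).add
          ((hx ▸ natCast_preHash_modEq p w x).mul_left (s - r))
    _ = s * (w.1 * y + w.2) := hline
    _ ≡ s * preHash p w y [ZMOD p] := (natCast_preHash_modEq p w y).symm.mul_left s

end PreHash

/-- The ratio `gcd(d, e) / max(d, e)`, the reciprocal of the larger term of the fraction `d / e`
in lowest terms. It measures how far a linear hash function is from three-wise independence on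
keys at distances `d` and `e` from a third one. -/
noncomputable def gcdDivMax (d e : ℕ) : ℝ :=
  Nat.gcd d e / (max d e : ℕ)

lemma gcdDivMax_nonneg (d e : ℕ) : 0 ≤ gcdDivMax d e := by
  unfold gcdDivMax; positivity

lemma gcdDivMax_comm (d e : ℕ) : gcdDivMax d e = gcdDivMax e d := by
  rw [gcdDivMax, gcdDivMax, Nat.gcd_comm, max_comm]

lemma gcdDivMax_of_le {d e : ℕ} (h : d ≤ e) : gcdDivMax d e = Nat.gcd d e / e := by
  rw [gcdDivMax, max_eq_right h]

lemma gcdDivMax_natAbs_eq_one_div {d e s : ℤ} (he : e ≠ 0) (hde : |d| ≤ |e|)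
    (hs : s * Int.gcd d e = |e|) : gcdDivMax d.natAbs e.natAbs = 1 / s := by
  have he' : (0 : ℝ) < e.natAbs := by exact_mod_cast Int.natAbs_pos.2 he
  have hs' : (s : ℝ) * Int.gcd d e = e.natAbs := by rw [Nat.cast_natAbs]; exact_mod_cast hs
  have hs0 : (s : ℝ) ≠ 0 := left_ne_zero_of_mul (hs' ▸ he'.ne')
  rw [gcdDivMax_of_le (by zify; exact hde), ← Int.gcd_def,
    div_eq_div_iff he'.ne' hs0, ← hs']
  ring

lemma sum_gcd_le_card_divisors_mul (e : ℕ) :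
    ∑ d ∈ Ioc 0 e, Nat.gcd d e ≤ #e.divisors * e := by
  obtain rfl | he := Nat.eq_zero_or_pos e
  · simp
  calc ∑ d ∈ Ioc 0 e, Nat.gcd d e
      ≤ ∑ d ∈ Ioc 0 e, ∑ g ∈ e.divisors, if g ∣ d then g else 0 := by
        refine sum_le_sum fun d _ ↦ ?_
        rw [← sum_filter]
        exact single_le_sum (f := fun g ↦ g) (fun _ _ ↦ Nat.zero_le _) (mem_filter.2
          ⟨Nat.mem_divisors.2 ⟨Nat.gcd_dvd_right d e, he.ne'⟩, Nat.gcd_dvd_left d e⟩)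
    _ = ∑ g ∈ e.divisors, ∑ d ∈ Ioc 0 e, if g ∣ d then g else 0 := sum_comm
    _ = ∑ _g ∈ e.divisors, e := by
        refine sum_congr rfl fun g hg ↦ ?_
        rw [← sum_filter, sum_const, Nat.Ioc_filter_dvd_card_eq_div, smul_eq_mul]
        exact Nat.div_mul_cancel (Nat.dvd_of_mem_divisors hg)
    _ = #e.divisors * e := by rw [sum_const, smul_eq_mul]

lemma sum_card_divisors_le (n : ℕ) :
    ∑ e ∈ Ioc 0 n, (#e.divisors : ℝ) ≤ n * (1 + Real.log n) := by
  calc ∑ e ∈ Ioc 0 n, (#e.divisors : ℝ) = ∑ d ∈ Ioc 0 n, ((n / d : ℕ) : ℝ) := by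
        simp only [← ArithmeticFunction.sigma_zero_apply]
        exact_mod_cast ArithmeticFunction.sum_Ioc_sigma0_eq_sum_div n
    _ ≤ ∑ d ∈ Ioc 0 n, (n : ℝ) * (d : ℝ)⁻¹ := sum_le_sum fun d _ ↦
        Nat.cast_div_le.trans_eq (div_eq_mul_inv _ _)
    _ = n * (harmonic n : ℝ) := by
        rw [← mul_sum, harmonic_eq_sum_Icc]
        push_cast
        rfl
    _ ≤ n * (1 + Real.log n) := by gcongr; exact harmonic_le_one_add_log n

lemma sum_sum_le_two_mul_sum_sum_filter_le {ι : Type*} [LinearOrder ι] (s : Finset ι)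
    {f : ι → ι → ℝ} (hf : ∀ i j, 0 ≤ f i j) (hsymm : ∀ i j, f i j = f j i) :
    ∑ i ∈ s, ∑ j ∈ s, f i j ≤ 2 * ∑ i ∈ s, ∑ j ∈ s with j ≤ i, f i j := by
  calc ∑ i ∈ s, ∑ j ∈ s, f i j
      ≤ ∑ i ∈ s, ∑ j ∈ s, ((if j ≤ i then f i j else 0) + if i ≤ j then f j i else 0) := by
        gcongr with i _ j _
        rcases le_total j i with h | h
        · rw [if_pos h]
          exact le_add_of_nonneg_right (ite_nonneg (hf j i) le_rfl)
        · rw [if_pos h, hsymm i j]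
          exact le_add_of_nonneg_left (ite_nonneg (hf j i) le_rfl)
    _ = 2 * ∑ i ∈ s, ∑ j ∈ s with j ≤ i, f i j := by
        simp only [sum_add_distrib, sum_filter, two_mul]
        congr 1
        exact sum_comm

lemma sum_gcdDivMax_Ioc_le (n : ℕ) :
    ∑ d ∈ Ioc 0 n, ∑ e ∈ Ioc 0 n, gcdDivMax d e ≤ 2 * (n * (1 + Real.log n)) := by
  have inner_le : ∀ e ∈ Ioc 0 n, ∑ d ∈ Ioc 0 n with d ≤ e, gcdDivMax e d ≤ #e.divisors := by
    intro e he
    obtain ⟨hpos, hle⟩ := mem_Ioc.1 he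
    have hfilter : {d ∈ Ioc 0 n | d ≤ e} = Ioc 0 e := by ext d; simp only [mem_filter, mem_Ioc]; lia
    have hterm : ∀ d ∈ Ioc 0 e, gcdDivMax e d = Nat.gcd d e / e := fun d hd ↦ by
      rw [gcdDivMax_comm, gcdDivMax_of_le (mem_Ioc.1 hd).2]
    rw [hfilter, sum_congr rfl hterm, ← sum_div, div_le_iff₀ (by exact_mod_cast hpos)]
    exact_mod_cast sum_gcd_le_card_divisors_mul e
  calc ∑ d ∈ Ioc 0 n, ∑ e ∈ Ioc 0 n, gcdDivMax d e
      ≤ 2 * ∑ e ∈ Ioc 0 n, ∑ d ∈ Ioc 0 n with d ≤ e, gcdDivMax e d :=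
        sum_sum_le_two_mul_sum_sum_filter_le _ gcdDivMax_nonneg gcdDivMax_comm
    _ ≤ 2 * ∑ e ∈ Ioc 0 n, (#e.divisors : ℝ) := by gcongr with e he; exact inner_le e he
    _ ≤ 2 * (n * (1 + Real.log n)) := by gcongr; exact sum_card_divisors_le n

lemma sum_natAbs_sub_le_two_mul_sum {X D : Finset ℕ} {x : ℕ} {f : ℕ → ℝ} (hf : ∀ d, 0 ≤ f d)
    (hD : ∀ y ∈ X, ((y : ℤ) - x).natAbs ∈ D) :
    ∑ y ∈ X, f ((y : ℤ) - x).natAbs ≤ 2 * ∑ d ∈ D, f d := by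
  have card_fiber_le (d : ℕ) : #(X.filter fun y : ℕ ↦ ((y : ℤ) - x).natAbs = d) ≤ 2 := by
    refine (card_le_card fun y hy ↦ ?_).trans (card_le_two (a := x + d) (b := x - d))
    have := (mem_filter.1 hy).2
    rw [mem_insert, mem_singleton]
    lia
  rw [← sum_fiberwise_of_maps_to hD, mul_sum]
  refine sum_le_sum fun d _ ↦ ?_
  calc ∑ y ∈ X.filter fun y : ℕ ↦ ((y : ℤ) - x).natAbs = d, f ((y : ℤ) - x).natAbs
      = #(X.filter fun y : ℕ ↦ ((y : ℤ) - x).natAbs = d) * f d := by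
        rw [sum_congr rfl fun y hy ↦ congrArg f (mem_filter.1 hy).2, sum_const, nsmul_eq_mul]
    _ ≤ 2 * f d := mul_le_mul_of_nonneg_right (by exact_mod_cast card_fiber_le d) (hf d)

lemma one_add_log_le_two_mul_logb {t : ℝ} (ht : 2 ≤ t) : 1 + Real.log t ≤ 2 * Real.logb 2 t := by
  have one_le_logb : 1 ≤ Real.logb 2 t := by
    rwa [Real.le_logb_iff_rpow_le one_lt_two (by linarith), Real.rpow_one]
  have log_le_logb : Real.log t ≤ Real.logb 2 t := by
    rw [Real.logb, le_div_iff₀ (Real.log_pos one_lt_two)]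
    exact mul_le_of_le_one_right (Real.log_nonneg (by linarith))
      (Real.log_two_lt_d9.le.trans (by norm_num))
  linarith

lemma sum_gcdDivMax_natAbs_sub_le {U x : ℕ} {X : Finset ℕ} (hU : 2 ≤ U) (hX : X ⊆ range U)
    (hx : x < U) (hxX : x ∉ X) :
    ∑ y ∈ X, ∑ z ∈ X, gcdDivMax ((y : ℤ) - x).natAbs ((z : ℤ) - x).natAbs ≤
      16 * U * Real.logb 2 U := by
  have mem_Ioc_of_mem : ∀ y ∈ X, ((y : ℤ) - x).natAbs ∈ Ioc 0 U := by
    intro y hy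
    have : y < U := mem_range.1 (hX hy)
    have : y ≠ x := fun h ↦ hxX (h ▸ hy)
    rw [mem_Ioc]
    lia
  calc ∑ y ∈ X, ∑ z ∈ X, gcdDivMax ((y : ℤ) - x).natAbs ((z : ℤ) - x).natAbs
      ≤ ∑ y ∈ X, 2 * ∑ e ∈ Ioc 0 U, gcdDivMax ((y : ℤ) - x).natAbs e :=
        sum_le_sum fun y _ ↦ sum_natAbs_sub_le_two_mul_sum (gcdDivMax_nonneg _) mem_Ioc_of_mem
    _ = 2 * ∑ y ∈ X, ∑ e ∈ Ioc 0 U, gcdDivMax ((y : ℤ) - x).natAbs e := by rw [mul_sum]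
    _ ≤ 2 * (2 * ∑ d ∈ Ioc 0 U, ∑ e ∈ Ioc 0 U, gcdDivMax d e) := by
        gcongr
        exact sum_natAbs_sub_le_two_mul_sum
          (fun d ↦ sum_nonneg fun e _ ↦ gcdDivMax_nonneg d e) mem_Ioc_of_mem
    _ ≤ 2 * (2 * (2 * (U * (1 + Real.log U)))) := by gcongr; exact sum_gcdDivMax_Ioc_le U
    _ ≤ 2 * (2 * (2 * (U * (2 * Real.logb 2 U)))) := by
        gcongr; exact one_add_log_le_two_mul_logb (by exact_mod_cast hU)
    _ = 16 * U * Real.logb 2 U := by ring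

lemma exists_isCoprime_mul_eq_mul {d e : ℤ} (he : e ≠ 0) :
    ∃ r s : ℤ, 0 < s ∧ IsCoprime r s ∧ s * d = r * e ∧ s * Int.gcd d e = |e| := by
  obtain ⟨d', e', hco, hd, he'⟩ := Int.exists_gcd_one (Int.gcd_pos_of_ne_zero_right d he)
  set g := Int.gcd d e
  have hg : 0 ≤ (g : ℤ) := Int.natCast_nonneg g
  have hco' : IsCoprime d' e' := Int.isCoprime_iff_gcd_eq_one.2 hco
  rcases lt_trichotomy e' 0 with hneg | rfl | hpos
  · refine ⟨-d', -e', by linarith, hco'.neg_neg, ?_, ?_⟩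
    · rw [hd, he']; ring
    · rw [he', abs_mul, abs_of_neg hneg, abs_of_nonneg hg]
  · exact absurd (he'.trans (zero_mul _)) he
  · refine ⟨d', e', hpos, hco', ?_, ?_⟩
    · rw [hd, he']; ring
    · rw [he', abs_mul, abs_of_pos hpos, abs_of_nonneg hg]

lemma card_preHashFiber_filter_le_of_mul_eq_mul {p m x y z : ℕ} {r s : ℤ} (q b₁ b₂ : ℕ)
    (hp : 0 < p) (hm : 0 < m) (hmp : IsCoprime (m : ℤ) p) (hzx : IsCoprime ((z : ℤ) - x) p)
    (hs : 0 < s) (hrs : |r| ≤ s) (hco : IsCoprime r s) (hsp : 4 * s ^ 2 ≤ p)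
    (hsmp : 4 * (s * m) ≤ p) (hratio : s * ((y : ℤ) - x) = r * ((z : ℤ) - x)) :
    (#{w ∈ preHashFiber p x q | preHash p w y % m = b₁ ∧ preHash p w z % m = b₂} : ℝ) ≤
      p / m ^ 2 + 2 * p / (s * m) := by
  calc (#{w ∈ preHashFiber p x q | preHash p w y % m = b₁ ∧ preHash p w z % m = b₂} : ℝ)
      ≤ #(modLine p m r s ((s - r) * q) b₂ b₁) := by
        refine Nat.cast_le.2 (card_le_card_of_injOn
          (fun w ↦ ((preHash p w z : ℤ), (preHash p w y : ℤ))) (fun w hw ↦ ?_)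
          fun w hw w' hw' h ↦ ?_)
        · obtain ⟨hwx, hwy, hwz⟩ := mem_filter.1 hw
          exact preHash_pair_mem_modLine hp hratio (mem_preHashFiber.1 hwx).2 hwy hwz
        · exact preHash_injOn_preHashFiber hzx (mem_filter.1 hw).1 (mem_filter.1 hw').1
            (Int.natCast_inj.1 (congrArg Prod.fst h))
    _ ≤ ((p : ℤ) : ℝ) / ((m : ℤ) : ℝ) ^ 2 + 2 * ((p : ℤ) : ℝ) / (s * ((m : ℤ) : ℝ)) :=
        card_modLine_le_of_four_mul_le (by lia) (by lia) hmp hs hrs hco hsp hsmp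
    _ = p / m ^ 2 + 2 * p / (s * m) := by rw [Int.cast_natCast, Int.cast_natCast]

lemma card_preHashFiber_filter_le_of_abs_le {U p m x y z : ℕ} (q b₁ b₂ : ℕ) (hp : p.Prime)
    (hpU : 4 * U ^ 2 < p) (hm : 0 < m) (hmU : m ≤ U) (hx : x < U) (hz : z < U) (hzx : z ≠ x)
    (hyz : |(y : ℤ) - x| ≤ |(z : ℤ) - x|) :
    (#{w ∈ preHashFiber p x q | preHash p w y % m = b₁ ∧ preHash p w z % m = b₂} : ℝ) ≤
      p * (1 / m ^ 2 + 2 / m * gcdDivMax ((y : ℤ) - x).natAbs ((z : ℤ) - x).natAbs) := by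
  have hUp : U < p := by nlinarith
  have hne : (z : ℤ) - x ≠ 0 := by lia
  obtain ⟨r, s, hs, hco, hratio, hsg⟩ := exists_isCoprime_mul_eq_mul (d := (y : ℤ) - x) hne
  have hmp : IsCoprime (m : ℤ) p :=
    Nat.isCoprime_iff_coprime.2 (Nat.coprime_of_lt_prime hm.ne' (by lia) hp).symm
  have hzxp : IsCoprime ((z : ℤ) - x) p := by
    rw [Int.isCoprime_iff_gcd_eq_one, Int.gcd, Int.natAbs_natCast]
    exact (Nat.coprime_of_lt_prime (by lia) (by lia) hp).symm
  have hrs : |r| ≤ s := by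
    refine le_of_mul_le_mul_right ?_ (abs_pos.2 hne)
    calc |r| * |(z : ℤ) - x| = s * |(y : ℤ) - x| := by
          rw [← abs_mul, ← hratio, abs_mul, abs_of_pos hs]
      _ ≤ s * |(z : ℤ) - x| := by gcongr
  have hsU : s ≤ U := by
    have hgcd : 0 < (Int.gcd ((y : ℤ) - x) ((z : ℤ) - x) : ℤ) := by
      exact_mod_cast Int.gcd_pos_of_ne_zero_right _ hne
    calc s ≤ s * Int.gcd ((y : ℤ) - x) ((z : ℤ) - x) := le_mul_of_one_le_right hs.le hgcd
      _ = |(z : ℤ) - x| := hsg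
      _ ≤ U := (Int.abs_sub_lt_of_lt_lt hx hz).le
  have : 4 * (U : ℤ) ^ 2 < p := by exact_mod_cast hpU
  have : (m : ℤ) ≤ U := by exact_mod_cast hmU
  calc (#{w ∈ preHashFiber p x q | preHash p w y % m = b₁ ∧ preHash p w z % m = b₂} : ℝ)
      ≤ p / m ^ 2 + 2 * p / (s * m) :=
        card_preHashFiber_filter_le_of_mul_eq_mul q b₁ b₂ hp.pos hm hmp hzxp hs hrs hco
          (by nlinarith) (by nlinarith) hratio
    _ = p * (1 / m ^ 2 + 2 / m * gcdDivMax ((y : ℤ) - x).natAbs ((z : ℤ) - x).natAbs) := by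
        rw [gcdDivMax_natAbs_eq_one_div hne hyz hsg]; ring

lemma card_preHashFiber_filter_le {U p m x y z : ℕ} (q b₁ b₂ : ℕ) (hp : p.Prime)
    (hpU : 4 * U ^ 2 < p) (hm : 0 < m) (hmU : m ≤ U) (hx : x < U) (hy : y < U) (hyx : y ≠ x)
    (hz : z < U) (hzx : z ≠ x) :
    (#{w ∈ preHashFiber p x q | preHash p w y % m = b₁ ∧ preHash p w z % m = b₂} : ℝ) ≤
      p * (1 / m ^ 2 + 2 / m * gcdDivMax ((y : ℤ) - x).natAbs ((z : ℤ) - x).natAbs) := by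
  rcases le_total |(y : ℤ) - x| |(z : ℤ) - x| with hyz | hzy
  · exact card_preHashFiber_filter_le_of_abs_le q b₁ b₂ hp hpU hm hmU hx hz hzx hyz
  · simp only [and_comm (a := _ % m = b₁), gcdDivMax_comm (Int.natAbs (y - x))]
    exact card_preHashFiber_filter_le_of_abs_le q b₂ b₁ hp hpU hm hmU hx hy hyx hzy

lemma card_filter_and_bucket_eq_sum {p : ℕ} (hp : 0 < p) (m x a : ℕ) (P : ℕ × ℕ → Prop)
    [DecidablePred P] :
    #{w ∈ range p ×ˢ range p | P w ∧ preHash p w x % m = a} =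
      ∑ q ∈ range p with q % m = a, #{w ∈ preHashFiber p x q | P w} := by
  rw [card_eq_sum_card_fiberwise (f := fun w ↦ preHash p w x) (t := {q ∈ range p | q % m = a})]
  · refine sum_congr rfl fun q hq ↦ congrArg card (Finset.ext fun w ↦ ?_)
    have := (mem_filter.1 hq).2
    simp only [preHashFiber, mem_filter]
    grind
  · intro w hw
    exact mem_coe.2 (mem_filter.2 ⟨mem_range.2 (Nat.mod_lt _ hp), (mem_filter.1 hw).2.2⟩)

lemma card_bucket_eq_sum {p : ℕ} (hp : 0 < p) (m x a : ℕ) :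
    #{w ∈ range p ×ˢ range p | preHash p w x % m = a} = ∑ q ∈ range p with q % m = a, p := by
  have := card_filter_and_bucket_eq_sum hp m x a fun _ ↦ True
  simp only [true_and, filter_true] at this
  rw [this]
  exact sum_congr rfl fun q hq ↦ card_preHashFiber (mem_range.1 (mem_filter.1 hq).1)

lemma card_filter_and_bucket_le {p : ℕ} (hp : 0 < p) (m x a : ℕ) {P : ℕ × ℕ → Prop}
    [DecidablePred P] {B : ℝ} (hB : ∀ q, (#{w ∈ preHashFiber p x q | P w} : ℝ) ≤ p * B) :
    (#{w ∈ range p ×ˢ range p | P w ∧ preHash p w x % m = a} : ℝ) ≤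
      #{w ∈ range p ×ˢ range p | preHash p w x % m = a} * B := by
  rw [card_filter_and_bucket_eq_sum hp, card_bucket_eq_sum hp, Nat.cast_sum, Nat.cast_sum, sum_mul]
  exact sum_le_sum fun q _ ↦ hB q

lemma card_joint_buckets_le {U p m x : ℕ} {X : Finset ℕ} (a b₁ b₂ : ℕ) (hp : p.Prime)
    (hpU : 4 * U ^ 2 < p) (hm : 0 < m) (hmU : m ≤ U) (hx : x < U) (hX : X ⊆ range U)
    (hxX : x ∉ X) :
    (#{w ∈ (range p ×ˢ range p) ×ˢ (X ×ˢ X) | preHash p w.1 w.2.1 % m = b₁ ∧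
        preHash p w.1 w.2.2 % m = b₂ ∧ preHash p w.1 x % m = a} : ℝ) ≤
      #{w ∈ range p ×ˢ range p | preHash p w x % m = a} * (#X ^ 2 / m ^ 2 +
        2 / m * ∑ y ∈ X, ∑ z ∈ X, gcdDivMax ((y : ℤ) - x).natAbs ((z : ℤ) - x).natAbs) := by
  have ne_of_mem : ∀ v ∈ X, v ≠ x := fun v hv h ↦ hxX (h ▸ hv)
  have lt_of_mem : ∀ v ∈ X, v < U := fun v hv ↦ mem_range.1 (hX hv)
  rw [card_filter, sum_product_right, sum_product]
  simp only [← and_assoc, ← card_filter]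
  push_cast
  calc ∑ y ∈ X, ∑ z ∈ X, (#{w ∈ range p ×ˢ range p | (preHash p w y % m = b₁ ∧
          preHash p w z % m = b₂) ∧ preHash p w x % m = a} : ℝ)
      ≤ ∑ y ∈ X, ∑ z ∈ X, #{w ∈ range p ×ˢ range p | preHash p w x % m = a} *
          (1 / m ^ 2 + 2 / m * gcdDivMax ((y : ℤ) - x).natAbs ((z : ℤ) - x).natAbs) :=
        sum_le_sum fun y hy ↦ sum_le_sum fun z hz ↦ card_filter_and_bucket_le hp.pos m x a
          fun q ↦ card_preHashFiber_filter_le q b₁ b₂ hp hpU hm hmU hx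
            (lt_of_mem y hy) (ne_of_mem y hy) (lt_of_mem z hz) (ne_of_mem z hz)
    _ = _ := by
        simp only [← mul_sum, sum_add_distrib, sum_const, nsmul_eq_mul]
        ring

/-- Close to three-wise independence in small universes. There is a
universal constant `C` such that: for `U ≥ 2`, a set `X ⊆ [U]` of `k ≥ 1` keys, a prime
`p > 4U²`, `1 ≤ m ≤ U`, a random linear hash function `h(v) = ((σv + τ) mod p) mod m`
(`σ, τ` uniform in `[p]`), a fixed key `x ∈ [U] \ X`, buckets `a, b ∈ [m]`, and `y, z ∈ X`
uniform and independent, `Pr(h(y) = h(z) = b ∣ h(x) = a) ≤ 1/m² + C·U·log₂U/(m·k²)`. -/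
theorem stmt_13 : ∃ C : ℝ, ∀ (U k p m x a b : ℕ) (X : Finset ℕ),
    2 ≤ U → X ⊆ Finset.range U → X.card = k → 1 ≤ k →
    p.Prime → 4 * U ^ 2 < p → 1 ≤ m → m ≤ U →
    x < U → x ∉ X → a < m → b < m →
    (((((Finset.range p ×ˢ Finset.range p) ×ˢ (X ×ˢ X)).filter fun w =>
          ((w.1.1 * w.2.1 + w.1.2) % p) % m = b ∧
          ((w.1.1 * w.2.2 + w.1.2) % p) % m = b ∧
          ((w.1.1 * x + w.1.2) % p) % m = a).card : ℝ)
        / ((((Finset.range p ×ˢ Finset.range p).filter fun στ =>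
              ((στ.1 * x + στ.2) % p) % m = a).card : ℝ) * (k : ℝ) ^ 2))
      ≤ 1 / (m : ℝ) ^ 2 + C * U * Real.logb 2 U / ((m : ℝ) * (k : ℝ) ^ 2) := by
  refine ⟨32, fun U k p m x a b X hU hX hk hk1 hp hpU hm hmU hx hxX _ _ ↦ ?_⟩
  have : (0 : ℝ) < m := by exact_mod_cast hm
  have : (0 : ℝ) < k := by exact_mod_cast hk1
  have : 0 ≤ Real.logb 2 U := Real.logb_nonneg one_lt_two (by exact_mod_cast one_le_two.trans hU)
  refine div_le_of_le_mul₀ (by positivity) (by positivity) ?_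
  calc _ ≤ _ := card_joint_buckets_le a b b hp hpU hm hmU hx hX hxX
    _ ≤ #{w ∈ range p ×ˢ range p | preHash p w x % m = a} *
        ((k : ℝ) ^ 2 / m ^ 2 + 2 / m * (16 * U * Real.logb 2 U)) := by
        rw [hk]
        gcongr
        exact sum_gcdDivMax_natAbs_sub_le hU hX hx hxX
    _ = (1 / m ^ 2 + 32 * U * Real.logb 2 U / (m * k ^ 2)) *
        (#{w ∈ range p ×ˢ range p | preHash p w x % m = a} * (k : ℝ) ^ 2) := by
        field_simp
        ring
end
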